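/- arXiv:1910.06182 — 4 statements merged into one kernel-verified Lean document; each statement's English description precedes it below -/
import Mathlib

section
/- For any n×n Cartan matrix A of a finite-dimensional complex simple Lie algebra and any reduced word ι = (i_1,…,i_k) of an element of the Weyl group of A, the cellular crystal B_ι is connected, i.e., the crystal graph on ℤ^k is a connected graph. -/
/-!
STATEMENT 0: For any n×n Cartan matrix A of a finite-dimensional complex simple
Lie algebra and any reduced word ι = (i_1,…,i_k) of an element of the Weyl group
of A, the cellular crystal B_ι is connected, i.e. the crystal graph on ℤ^k is a
connected graph.
-/

/-- The simple reflection `s_i` of the Cartan matrix `a`, acting on the root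
lattice (tensored with `ℚ`), `s_i(α_j) = α_j - a_{ij} α_i`. -/
def sRefl {n : ℕ} (a : Fin n → Fin n → ℤ) (i : Fin n) : (Fin n → ℚ) → (Fin n → ℚ) :=
  fun v => v - (∑ j, (a i j : ℚ) * v j) • (Pi.single i 1 : Fin n → ℚ)

/-- The product `s_{i_1} s_{i_2} ⋯ s_{i_k}` of simple reflections along a word. -/
def wProd {n : ℕ} (a : Fin n → Fin n → ℤ) (l : List (Fin n)) : (Fin n → ℚ) → (Fin n → ℚ) :=
  (l.map (sRefl a)).foldr (· ∘ ·) id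

/-- An `n×n` Cartan matrix of a finite-dimensional complex simple Lie algebra:
an indecomposable generalized Cartan matrix whose Weyl group is finite. -/
structure SimpleCartanMatrix (n : ℕ) where
  a : Fin n → Fin n → ℤ
  npos : 0 < n
  diag : ∀ i, a i i = 2
  offdiag_nonpos : ∀ i j, i ≠ j → a i j ≤ 0
  zero_symm : ∀ i j, a i j = 0 → a j i = 0
  indecomposable : ∀ S : Set (Fin n), (∀ i ∈ S, ∀ j, j ∉ S → a i j = 0) → S = ∅ ∨ S = Set.univ
  finiteWeyl : Set.Finite {w : (Fin n → ℚ) → (Fin n → ℚ) | ∃ l : List (Fin n), w = wProd a l}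

/-- A word is reduced if it has minimal length among all words representing the
same Weyl group element. -/
def IsReducedList {n : ℕ} (a : Fin n → Fin n → ℤ) (l : List (Fin n)) : Prop :=
  ∀ l' : List (Fin n), wProd a l' = wProd a l → l.length ≤ l'.length

/-- The function `a_m(x) = -x_m - ∑_{ν<m} a_{i,i_ν} x_ν` (for `m` with `i_m = i`). -/
def cellA {n k : ℕ} (a : Fin n → Fin n → ℤ) (ι : Fin k → Fin n) (i : Fin n)
    (x : Fin k → ℤ) (m : Fin k) : ℤ :=
  - x m - ∑ ν ∈ Finset.univ.filter (fun ν => ν < m), a i (ι ν) * x ν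

/-- The set of indices `m` with `i_m = i` at which `a_m(x)` attains its minimum. -/
def argminSet {n k : ℕ} (a : Fin n → Fin n → ℤ) (ι : Fin k → Fin n) (i : Fin n)
    (x : Fin k → ℤ) : Finset (Fin k) :=
  (Finset.univ.filter (fun m => ι m = i)).filter
    (fun m => ∀ m' ∈ Finset.univ.filter (fun m' => ι m' = i), cellA a ι i x m ≤ cellA a ι i x m')

/-- The Kashiwara operator `ẽ_i` of the cellular crystal `B_ι` on `ℤ^k`:
increase the `k_e(x)`-th coordinate by 1, where `k_e(x)` is the smallest index
`m` with `i_m = i` at which `a_m(x)` attains its minimum. -/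
def kashE {n k : ℕ} (a : Fin n → Fin n → ℤ) (ι : Fin k → Fin n) (i : Fin n)
    (x : Fin k → ℤ) : Fin k → ℤ :=
  if h : (argminSet a ι i x).Nonempty then
    Function.update x ((argminSet a ι i x).min' h) (x ((argminSet a ι i x).min' h) + 1)
  else x

/-- The Kashiwara operator `f̃_i` of the cellular crystal `B_ι` on `ℤ^k`:
decrease the `k_f(x)`-th coordinate by 1, where `k_f(x)` is the largest index
`m` with `i_m = i` at which `a_m(x)` attains its minimum. -/
def kashF {n k : ℕ} (a : Fin n → Fin n → ℤ) (ι : Fin k → Fin n) (i : Fin n)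
    (x : Fin k → ℤ) : Fin k → ℤ :=
  if h : (argminSet a ι i x).Nonempty then
    Function.update x ((argminSet a ι i x).max' h) (x ((argminSet a ι i x).max' h) - 1)
  else x

/-- The edge relation of the crystal graph of `B_ι`: an edge between `x` and
`f̃_i(x)` for every `x` and every `i` occurring in `ι`. -/
def cellEdge {n k : ℕ} (a : Fin n → Fin n → ℤ) (ι : Fin k → Fin n)
    (x y : Fin k → ℤ) : Prop :=
  ∃ i : Fin n, (∃ m, ι m = i) ∧ (kashF a ι i x = y ∨ kashF a ι i y = x)

/-!
Let `λ` be a strictly dominant weight and `w = s_{i_1} ⋯ s_{i_k}`. If `ℓ(s_i v) > ℓ(v)` then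
`⟨vλ, α_i^∨⟩ > 0`: splitting off from `v` a longest factor in a rank-two parabolic subgroup reduces
this to dihedral groups. For a reduced word all entries
`u_m = ⟨s_{i_{m+1}} ⋯ s_{i_k} λ, α_{i_m}^∨⟩` are therefore positive, and `a_m(u) = ⟨wλ, α_{i_m}^∨⟩`
depends on `m` only through `i_m`, so translation by `u` is an automorphism of the crystal graph.

For large `N` the point `x + N u` is connected to `0`. By translation invariance, a number of
steps independent of `N`, taken by `f̃_{i_1}` in the crystal of `(i_2, …, i_k)`, raises all its
`a_m` with `i_m = i_1` above the first coordinate of `x + N u`. From there `f̃_{i_1}` lowers that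
coordinate to `0`, and induction on `k` handles the rest. Steps lift to the longer word only where
the first coordinate does not win the minimum, which is why the minima are kept nonpositive
throughout. Choosing one `N` for both `x` and `y` and translating back by `N u` joins `x` to `y`.
-/

/-! ### Generalized Cartan matrices and their Coxeter groups -/

/-- A generalized Cartan matrix, i.e. the input of a Kac–Moody algebra: the axioms of a Cartan
matrix without indecomposability and without finiteness of the Weyl group. -/
structure IsGeneralizedCartanMatrix {B : Type*} (a : B → B → ℤ) : Prop where
  diag : ∀ i, a i i = 2
  offdiag_nonpos : ∀ i j, i ≠ j → a i j ≤ 0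
  zero_symm : ∀ i j, a i j = 0 → a j i = 0

namespace IsGeneralizedCartanMatrix

variable {B : Type*} {a : B → B → ℤ} {i j : B}

theorem mul_nonneg (ha : IsGeneralizedCartanMatrix a) (hij : i ≠ j) : 0 ≤ a i j * a j i :=
  mul_nonneg_of_nonpos_of_nonpos (ha.offdiag_nonpos i j hij) (ha.offdiag_nonpos j i hij.symm)

theorem entries_of_mul_lt_four (ha : IsGeneralizedCartanMatrix a) (hij : i ≠ j)
    (hc : a i j * a j i < 4) :
    (a i j, a j i) ∈
      ({(0, 0), (-1, -1), (-1, -2), (-2, -1), (-1, -3), (-3, -1)} : Finset (ℤ × ℤ)) := by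
  have hx := ha.offdiag_nonpos i j hij
  have hy := ha.offdiag_nonpos j i hij.symm
  have hxy := ha.zero_symm i j
  have hyx := ha.zero_symm j i
  generalize a i j = x at *
  generalize a j i = y at *
  obtain rfl | hx0 := eq_or_ne x 0
  · simp [hxy rfl]
  · have hy0 : y ≠ 0 := fun h => hx0 (hyx h)
    have : -3 ≤ x := by nlinarith [lt_of_le_of_ne hx hx0, lt_of_le_of_ne hy hy0]
    have : -3 ≤ y := by nlinarith [lt_of_le_of_ne hx hx0, lt_of_le_of_ne hy hy0]
    interval_cases x <;> interval_cases y <;> simp_all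

end IsGeneralizedCartanMatrix

/-- The order of `s_i s_j` in the Weyl group as a function of `c = a_{ij} a_{ji}`, with `0` standing
for infinite order, as in `CoxeterMatrix`. -/
def braidOrder : ℤ → ℕ
  | 0 => 2
  | 1 => 3
  | 2 => 4
  | 3 => 6
  | _ => 0

theorem braidOrder_ne_one (c : ℤ) : braidOrder c ≠ 1 := by
  unfold braidOrder
  split <;> decide

theorem braidOrder_eq_zero {c : ℤ} (hc : 4 ≤ c) : braidOrder c = 0 := by
  unfold braidOrder
  split <;> omega

theorem braidOrder_ne_zero {c : ℤ} (hnonneg : 0 ≤ c) (hc : c < 4) : braidOrder c ≠ 0 := by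
  interval_cases c <;> decide

open Classical in
/-- The Coxeter matrix of the Weyl group of a generalized Cartan matrix. -/
noncomputable def weylCoxeterMatrix {B : Type*} (a : B → B → ℤ) : CoxeterMatrix B where
  M := .of fun i j => if i = j then 1 else braidOrder (a i j * a j i)
  isSymm := by
    ext i j
    simp only [Matrix.transpose_apply, Matrix.of_apply, eq_comm (a := j), mul_comm (a j i)]
  diagonal i := by simp
  off_diagonal i j hij := by simp [hij, braidOrder_ne_one]

theorem weylCoxeterMatrix_apply {B : Type*} (a : B → B → ℤ) {i j : B} (hij : i ≠ j) :
    weylCoxeterMatrix a i j = braidOrder (a i j * a j i) :=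
  if_neg hij

/-- The Weyl group of a generalized Cartan matrix, presented as a Coxeter system. -/
noncomputable abbrev weylCoxeterSystem {B : Type*} (a : B → B → ℤ) :
    CoxeterSystem (weylCoxeterMatrix a) (weylCoxeterMatrix a).Group :=
  (weylCoxeterMatrix a).toCoxeterSystem

/-! ### Reflection representations -/

/-- A realization of `a`: simple roots in `M` and simple coroots in the dual of `M` whose pairings
are the entries of `a`. No linear independence is required. -/
structure Realization {B : Type*} (a : B → B → ℤ) (R M : Type*) [CommRing R] [AddCommGroup M]
    [Module R M] where
  root : B → M
  coroot : B → Module.Dual R M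
  coroot_root : ∀ i j, coroot i (root j) = (a i j : R)

namespace Realization

open Module CoxeterSystem

variable {B R M : Type*} [CommRing R] [AddCommGroup M] [Module R M] {a : B → B → ℤ}
  (r : Realization a R M) (ha : IsGeneralizedCartanMatrix a)

include ha in
theorem coroot_root_self (i : B) : r.coroot i (r.root i) = 2 := by
  rw [r.coroot_root, ha.diag, Int.cast_ofNat]

/-- The simple reflection `v ↦ v - ⟨v, α_i^∨⟩ α_i` of a realization. -/
def simpleReflection (i : B) : M ≃ₗ[R] M :=
  reflection (r.coroot_root_self ha i)

theorem simpleReflection_apply (i : B) (v : M) :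
    r.simpleReflection ha i v = v - r.coroot i v • r.root i :=
  rfl

theorem coroot_simpleReflection (i j : B) (v : M) :
    r.coroot i (r.simpleReflection ha j v) = r.coroot i v - a i j * r.coroot j v := by
  rw [simpleReflection_apply, map_sub, map_smul, coroot_root, smul_eq_mul, mul_comm]

theorem coroot_simpleReflection_self (i : B) (v : M) :
    r.coroot i (r.simpleReflection ha i v) = -r.coroot i v := by
  rw [coroot_simpleReflection, ha.diag, Int.cast_ofNat, two_mul, sub_add_cancel_left]

theorem simpleReflection_mul_pow_braidOrder {i j : B} (hij : i ≠ j) :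
    (r.simpleReflection ha i * r.simpleReflection ha j) ^ braidOrder (a i j * a j i) = 1 := by
  have hnonneg := ha.mul_nonneg hij
  obtain hc | hc := le_or_gt 4 (a i j * a j i)
  · rw [braidOrder_eq_zero hc, pow_zero]
  refine LinearEquiv.toLinearMap_injective ?_
  -- Powers of a product of two reflections have Chebyshev polynomials at `a_ij a_ji - 2` as
  -- coefficients; at the exponents 3, 4, 6 these coefficients vanish.
  have ht : ((a i j * a j i - 2 : ℤ) : R) = r.coroot i (r.root j) * r.coroot j (r.root i) - 2 := by
    push_cast [coroot_root]
    rfl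
  rw [simpleReflection, simpleReflection, reflection_mul_reflection_pow _ _ _ _ ht]
  interval_cases hprod : a i j * a j i
  · have hij0 : a i j = 0 := (mul_eq_zero.mp hprod).elim id (ha.zero_symm j i)
    have hji0 : a j i = 0 := ha.zero_symm i j hij0
    ext v
    simp [braidOrder, coroot_root, hij0, hji0]
    module
  all_goals
    ext v
    simp [braidOrder, Polynomial.Chebyshev.S_two]

theorem isLiftable_simpleReflection : (weylCoxeterMatrix a).IsLiftable (r.simpleReflection ha) := by
  intro i j
  obtain rfl | hij := eq_or_ne i j
  · rw [(weylCoxeterMatrix a).diagonal, pow_one]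
    exact LinearEquiv.ext (involutive_reflection (r.coroot_root_self ha i))
  · rw [weylCoxeterMatrix_apply a hij, simpleReflection_mul_pow_braidOrder r ha hij]

/-- The action of the Weyl group on a realization. -/
noncomputable def rep : (weylCoxeterMatrix a).Group →* (M ≃ₗ[R] M) :=
  (weylCoxeterSystem a).lift ⟨r.simpleReflection ha, r.isLiftable_simpleReflection ha⟩

theorem rep_simple (i : B) :
    r.rep ha ((weylCoxeterSystem a).simple i) = r.simpleReflection ha i :=
  (weylCoxeterSystem a).lift_apply_simple (r.isLiftable_simpleReflection ha) i

end Realization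

/-! ### Length and the sign of simple coroots -/

section DihedralFactorization

open CoxeterSystem

variable {B W : Type*} [Group W] {M : CoxeterMatrix B} (cs : CoxeterSystem M W)

theorem length_mul_wordProd_le (v : W) (l : List B) :
    cs.length (v * cs.wordProd l) ≤ cs.length v + l.length :=
  (cs.length_mul_le v _).trans (Nat.add_le_add_left (cs.length_wordProd_le l) _)

theorem exists_maximal_alternatingWord_factorization {w : W} (i : B) {j : B}
    (hj : cs.IsRightDescent w j) :
    ∃ v p, w = v * cs.wordProd (alternatingWord i j p) ∧ cs.length w = cs.length v + p ∧ 0 < p ∧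
      ¬cs.IsRightDescent v i ∧ ¬cs.IsRightDescent v j := by
  let S : Set ℕ := {p | ∃ v, w = v * cs.wordProd (alternatingWord i j p) ∧
    cs.length w = cs.length v + p}
  have hone : 1 ∈ S :=
    ⟨w * cs.simple j, by simp [alternatingWord], (cs.isRightDescent_iff.mp hj).symm⟩
  have hbdd : BddAbove S := ⟨cs.length w, by rintro p ⟨v, -, hp⟩; omega⟩
  obtain ⟨v, hw, hlen⟩ := Nat.sSup_mem ⟨1, hone⟩ hbdd
  obtain ⟨q, hq⟩ := Nat.exists_eq_add_of_le' (le_csSup hbdd hone)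
  rw [hq] at hw hlen
  have hhead : ¬cs.IsRightDescent v (if Even q then j else i) := by
    intro hdesc
    rw [alternatingWord_succ', wordProd_cons, ← mul_assoc] at hw
    have := length_mul_wordProd_le cs (v * cs.simple (if Even q then j else i))
      (alternatingWord i j q)
    rw [← hw, length_alternatingWord] at this
    have := cs.isRightDescent_iff.mp hdesc
    omega
  have hother : ¬cs.IsRightDescent v (if Even (q + 1) then j else i) := by
    intro hdesc
    have hmem : q + 2 ∈ S := by
      refine ⟨v * cs.simple (if Even (q + 1) then j else i), ?_, ?_⟩
      · rw [alternatingWord_succ', wordProd_cons, mul_assoc, simple_mul_simple_cancel_left, hw]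
      · have := cs.isRightDescent_iff.mp hdesc
        omega
    have := le_csSup hbdd hmem
    omega
  refine ⟨v, q + 1, hw, hlen, q.succ_pos, ?_⟩
  by_cases hparity : Even q <;> simp_all [Nat.even_add_one]

theorem isReduced_alternatingWord_of_not_isRightDescent {v : W} {i j : B} {p : ℕ}
    (hlen : cs.length (v * cs.wordProd (alternatingWord i j p)) = cs.length v + p)
    (hi : ¬cs.IsRightDescent (v * cs.wordProd (alternatingWord i j p)) i) :
    cs.IsReduced (alternatingWord j i (p + 1)) := by
  have hup := cs.not_isRightDescent_iff.mp hi
  rw [mul_assoc, ← wordProd_concat, ← alternatingWord_succ, hlen] at hup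
  have hle := cs.length_mul_le v (cs.wordProd (alternatingWord j i (p + 1)))
  refine le_antisymm (cs.length_wordProd_le _) ?_
  rw [length_alternatingWord]
  omega

end DihedralFactorization

namespace Realization

open CoxeterSystem

variable {B R V : Type*} [CommRing R] [AddCommGroup V] [Module R V] {a : B → B → ℤ}
  (r : Realization a R V) (ha : IsGeneralizedCartanMatrix a)

theorem rep_wordProd_cons (i : B) (l : List B) (v : V) :
    r.rep ha ((weylCoxeterSystem a).wordProd (i :: l)) v =
      r.simpleReflection ha i (r.rep ha ((weylCoxeterSystem a).wordProd l) v) := by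
  rw [wordProd_cons, map_mul, rep_simple, LinearEquiv.mul_apply]

theorem rep_inv_wordProd_concat (l : List B) (j : B) (v : V) :
    r.rep ha ((weylCoxeterSystem a).wordProd (l.concat j))⁻¹ v =
      r.simpleReflection ha j (r.rep ha ((weylCoxeterSystem a).wordProd l)⁻¹ v) := by
  rw [wordProd_concat, mul_inv_rev, inv_simple, map_mul, rep_simple, LinearEquiv.mul_apply]

variable [LinearOrder R] [IsStrictOrderedRing R]

-- The region `0 < x`, `0 ≤ y`, `2 * y ≤ -a_ij * x` of linear forms `x * α_i^∨ + y * α_j^∨` is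
-- mapped by `s_j` to the same region with `i` and `j` exchanged.
theorem pos_coroot_comb_alternatingWord {i j : B} (hij : i ≠ j) (hc : 4 ≤ a i j * a j i) {μ : V}
    (hi : 0 < r.coroot i μ) (hj : 0 < r.coroot j μ) (p : ℕ) {x y : R} (hx : 0 < x) (hy : 0 ≤ y)
    (hxy : 2 * y ≤ -a i j * x) :
    0 < x * r.coroot i (r.rep ha ((weylCoxeterSystem a).wordProd (alternatingWord i j p))⁻¹ μ) +
      y * r.coroot j (r.rep ha ((weylCoxeterSystem a).wordProd (alternatingWord i j p))⁻¹ μ) := by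
  induction p generalizing i j x y with
  | zero =>
    simp only [alternatingWord, wordProd_nil, inv_one, map_one, LinearEquiv.coe_one, id_eq]
    positivity
  | succ p ih =>
    have hcR : (4 : R) ≤ a i j * a j i := by exact_mod_cast hc
    have haij_ne : (a i j : R) ≠ 0 := by
      intro h
      norm_num [h] at hcR
    have haij : (a i j : R) < 0 :=
      lt_of_le_of_ne (by exact_mod_cast ha.offdiag_nonpos i j hij) haij_ne
    have haji : (a j i : R) ≤ 0 := by exact_mod_cast ha.offdiag_nonpos j i hij.symm
    have hx' : 0 < -a i j * x - y := by nlinarith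
    have hxy' : 2 * x ≤ -a j i * (-a i j * x - y) := by nlinarith
    have := ih hij.symm (mul_comm (a i j) _ ▸ hc) hj hi hx' hx.le hxy'
    rw [alternatingWord_succ, rep_inv_wordProd_concat, coroot_simpleReflection_self,
      coroot_simpleReflection]
    linarith

theorem pos_coroot_alternatingWord_of_lt_braidOrder {i j : B} (hij : i ≠ j) {μ : V}
    (hi : 0 < r.coroot i μ) (hj : 0 < r.coroot j μ) {p : ℕ}
    (hp : p < braidOrder (a i j * a j i)) :
    0 < r.coroot i
      (r.rep ha ((weylCoxeterSystem a).wordProd (alternatingWord i j p))⁻¹ μ) := by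
  have hc : a i j * a j i < 4 := by
    by_contra! h
    rw [braidOrder_eq_zero h] at hp
    exact p.not_lt_zero hp
  have hentries := ha.entries_of_mul_lt_four hij hc
  simp only [Finset.mem_insert, Finset.mem_singleton, Prod.mk.injEq] at hentries
  rcases hentries with ⟨haij, haji⟩ | ⟨haij, haji⟩ | ⟨haij, haji⟩ | ⟨haij, haji⟩ | ⟨haij, haji⟩ |
    ⟨haij, haji⟩ <;>
  · norm_num [haij, haji, braidOrder] at hp
    interval_cases p <;>
    · simp only [alternatingWord, wordProd_nil, inv_one, map_one, LinearEquiv.coe_one, id_eq,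
        rep_inv_wordProd_concat, coroot_simpleReflection, ha.diag, haij, haji]
      push_cast
      linarith

theorem pos_coroot_alternatingWord {i j : B} (hij : i ≠ j) {μ : V} (hi : 0 < r.coroot i μ)
    (hj : 0 < r.coroot j μ) {p : ℕ}
    (hred : (weylCoxeterSystem a).IsReduced (alternatingWord j i (p + 1))) :
    0 < r.coroot i
      (r.rep ha ((weylCoxeterSystem a).wordProd (alternatingWord i j p))⁻¹ μ) := by
  obtain hc | hc := le_or_gt 4 (a i j * a j i)
  · have hxy : 2 * (0 : R) ≤ -a i j * 1 := by
      have : (a i j : R) ≤ 0 := by exact_mod_cast ha.offdiag_nonpos i j hij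
      linarith
    simpa using r.pos_coroot_comb_alternatingWord ha hij hc hi hj p one_pos le_rfl hxy
  · refine r.pos_coroot_alternatingWord_of_lt_braidOrder ha hij hi hj ?_
    rw [mul_comm] at hc ⊢
    have hm : weylCoxeterMatrix a j i ≠ 0 := by
      rw [weylCoxeterMatrix_apply a hij.symm]
      exact braidOrder_ne_zero (ha.mul_nonneg hij.symm) hc
    rw [← weylCoxeterMatrix_apply a hij.symm]
    by_contra! hp
    exact (weylCoxeterSystem a).not_isReduced_alternatingWord j i hm (Nat.lt_succ_of_le hp) hred

theorem pos_coroot_inv_of_not_isRightDescent {μ : V} (hμ : ∀ i, 0 < r.coroot i μ)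
    (w : (weylCoxeterMatrix a).Group) (i : B) (hi : ¬(weylCoxeterSystem a).IsRightDescent w i) :
    0 < r.coroot i (r.rep ha w⁻¹ μ) := by
  induction hn : (weylCoxeterSystem a).length w using Nat.strong_induction_on generalizing w i with
  | _ n ih =>
  obtain rfl | hw := eq_or_ne w 1
  · simpa using hμ i
  obtain ⟨j, hj⟩ := (weylCoxeterSystem a).exists_rightDescent_of_ne_one hw
  have hij : i ≠ j := by
    rintro rfl
    exact hi hj
  obtain ⟨v, p, rfl, hlen, hp, hvi, hvj⟩ :=
    exists_maximal_alternatingWord_factorization (weylCoxeterSystem a) i hj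
  rw [mul_inv_rev, map_mul, LinearEquiv.mul_apply]
  exact r.pos_coroot_alternatingWord ha hij (ih _ (by omega) v i hvi rfl)
    (ih _ (by omega) v j hvj rfl)
    (isReduced_alternatingWord_of_not_isRightDescent _ hlen hi)

theorem pos_coroot_of_not_isLeftDescent {μ : V} (hμ : ∀ i, 0 < r.coroot i μ)
    {w : (weylCoxeterMatrix a).Group} {i : B} (hi : ¬(weylCoxeterSystem a).IsLeftDescent w i) :
    0 < r.coroot i (r.rep ha w μ) := by
  rw [← isRightDescent_inv_iff] at hi
  simpa using r.pos_coroot_inv_of_not_isRightDescent ha hμ w⁻¹ i hi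

end Realization

/-! ### Reduced words in the root and weight realizations -/

/-- The realization on the root lattice with scalars `R`, whose roots are the unit vectors. -/
noncomputable def rootRealization {B : Type*} [Fintype B] [DecidableEq B] (a : B → B → ℤ)
    (R : Type*) [CommRing R] : Realization a R (B → R) where
  root j := Pi.single j 1
  coroot i := ∑ j, (a i j : R) • LinearMap.proj j
  coroot_root i j := by simp [Pi.single_apply]

/-- The realization on the integral weight lattice in the basis of fundamental weights, whose
coroots are the coordinate functions. -/
def weightRealization {B : Type*} (a : B → B → ℤ) : Realization a ℤ (B → ℤ) where
  root j i := a i j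
  coroot i := LinearMap.proj i
  coroot_root _ _ := rfl

theorem wProd_eq_rep {n : ℕ} {a : Fin n → Fin n → ℤ} (ha : IsGeneralizedCartanMatrix a)
    (l : List (Fin n)) :
    wProd a l = (rootRealization a ℚ).rep ha ((weylCoxeterSystem a).wordProd l) := by
  induction l with
  | nil => simp [wProd]
  | cons i l ih =>
    ext1 v
    rw [Realization.rep_wordProd_cons, ← ih, Realization.simpleReflection_apply]
    simp [wProd, sRefl, rootRealization]

theorem IsReducedList.isReduced {n : ℕ} {a : Fin n → Fin n → ℤ}
    (ha : IsGeneralizedCartanMatrix a) {l : List (Fin n)} (hl : IsReducedList a l) :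
    (weylCoxeterSystem a).IsReduced l := by
  obtain ⟨l', hl', hprod⟩ :=
    (weylCoxeterSystem a).exists_isReduced ((weylCoxeterSystem a).wordProd l)
  refine le_antisymm ((weylCoxeterSystem a).length_wordProd_le l) ?_
  rw [hprod, hl'.eq]
  exact hl l' (by rw [wProd_eq_rep ha, wProd_eq_rep ha, hprod])

/-! ### Cellular crystals -/

section Cellular

open Relation

variable {n k : ℕ} {a : Fin n → Fin n → ℤ}

theorem cellA_zero (ι : Fin (k + 1) → Fin n) (i : Fin n) (x : Fin (k + 1) → ℤ) :
    cellA a ι i x 0 = -x 0 := by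
  simp [cellA]

theorem cellA_succ (ι : Fin (k + 1) → Fin n) (i : Fin n) (x : Fin (k + 1) → ℤ) (m : Fin k) :
    cellA a ι i x m.succ = cellA a (Fin.tail ι) i (Fin.tail x) m - a i (ι 0) * x 0 := by
  simp only [cellA, Finset.sum_filter, Fin.sum_univ_succ, Fin.succ_lt_succ_iff, Fin.succ_pos,
    if_true, Fin.tail]
  ring

variable (ι : Fin k → Fin n) (i : Fin n)

theorem cellA_add_smul (x u : Fin k → ℤ) (N : ℤ) (m : Fin k) :
    cellA a ι i (x + N • u) m = cellA a ι i x m + N * cellA a ι i u m := by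
  simp only [cellA, Pi.add_apply, Pi.smul_apply, smul_eq_mul, mul_add, Finset.sum_add_distrib,
    mul_left_comm _ N, ← Finset.mul_sum]
  ring

theorem cellA_update_sub_one (x : Fin k → ℤ) (m m' : Fin k) :
    cellA a ι i (Function.update x m (x m - 1)) m' =
      cellA a ι i x m' + ((if m' = m then 1 else 0) + if m < m' then a i (ι m) else 0) := by
  have hx : Function.update x m (x m - 1) = x + (-1 : ℤ) • Pi.single m 1 := by
    ext ν
    obtain rfl | hν := eq_or_ne ν m
    · simp [sub_eq_add_neg]
    · simp [hν]
  rw [hx, cellA_add_smul]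
  simp only [cellA, Pi.single_apply, mul_ite, mul_one, mul_zero, Finset.sum_ite_eq',
    Finset.mem_filter_univ]
  ring

variable {ι i}

theorem mem_argminSet {x : Fin k → ℤ} {m : Fin k} :
    m ∈ argminSet a ι i x ↔ ι m = i ∧ ∀ m', ι m' = i → cellA a ι i x m ≤ cellA a ι i x m' := by
  simp [argminSet]

/-- The vector `u` gives all `a_m(u)` with `i_m = i` the same value `c i`. Translation by the
multiples of such a vector commutes with every `f̃_i`. -/
def IsBalanced (a : Fin n → Fin n → ℤ) (ι : Fin k → Fin n) (c : Fin n → ℤ) (u : Fin k → ℤ) : Prop :=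
  ∀ m, cellA a ι (ι m) u m = c (ι m)

theorem IsBalanced.cellA_eq {c : Fin n → ℤ} {u : Fin k → ℤ} (hu : IsBalanced a ι c u) {m : Fin k}
    (hm : ι m = i) : cellA a ι i u m = c i :=
  hm ▸ hu m

theorem IsBalanced.argminSet_add_smul {c : Fin n → ℤ} {u : Fin k → ℤ} (hu : IsBalanced a ι c u)
    (i : Fin n) (x : Fin k → ℤ) (N : ℤ) : argminSet a ι i (x + N • u) = argminSet a ι i x := by
  ext m
  rw [mem_argminSet, mem_argminSet]
  refine and_congr_right fun hm => forall₂_congr fun m' hm' => ?_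
  rw [cellA_add_smul, cellA_add_smul, hu.cellA_eq hm, hu.cellA_eq hm', add_le_add_iff_right]

theorem IsBalanced.kashF_add_smul {c : Fin n → ℤ} {u : Fin k → ℤ} (hu : IsBalanced a ι c u)
    (i : Fin n) (x : Fin k → ℤ) (N : ℤ) : kashF a ι i (x + N • u) = kashF a ι i x + N • u := by
  simp only [kashF, hu.argminSet_add_smul]
  split
  · ext ν
    simp only [Function.update_apply, Pi.add_apply]
    split
    · subst ν
      ring
    · rfl
  · rfl

theorem IsBalanced.cons (ha : IsGeneralizedCartanMatrix a) {ι : Fin (k + 1) → Fin n}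
    {c : Fin n → ℤ} {u : Fin k → ℤ} (hu : IsBalanced a (Fin.tail ι) c u) :
    IsBalanced a ι ((weightRealization a).simpleReflection ha (ι 0) c) (Fin.cons (c (ι 0)) u) := by
  intro m
  induction m using Fin.cases with
  | zero =>
    rw [cellA_zero, Fin.cons_zero]
    exact ((weightRealization a).coroot_simpleReflection_self ha (ι 0) c).symm
  | succ m =>
    rw [cellA_succ, Fin.tail_cons, Fin.cons_zero]
    exact (congrArg (· - _) (hu m)).trans
      ((weightRealization a).coroot_simpleReflection ha (ι m.succ) (ι 0) c).symm

theorem IsBalanced.tail {ι : Fin (k + 1) → Fin n} {c : Fin n → ℤ} {u : Fin (k + 1) → ℤ}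
    (hu : IsBalanced a ι c u) :
    IsBalanced a (Fin.tail ι) (fun i => c i + a i (ι 0) * u 0) (Fin.tail u) := by
  intro m
  have := hu m.succ
  rw [cellA_succ] at this
  exact sub_eq_iff_eq_add.mp this

theorem exists_pos_isBalanced (ha : IsGeneralizedCartanMatrix a) {k : ℕ} {ι : Fin k → Fin n}
    (hred : (weylCoxeterSystem a).IsReduced (List.ofFn ι)) :
    ∃ u, (∀ m, 0 < u m) ∧ IsBalanced a ι
      ((weightRealization a).rep ha ((weylCoxeterSystem a).wordProd (List.ofFn ι)) 1) u := by
  induction k with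
  | zero => exact ⟨0, fun m => m.elim0, fun m => m.elim0⟩
  | succ k ih =>
    rw [List.ofFn_succ] at hred ⊢
    have htail : (weylCoxeterSystem a).IsReduced (List.ofFn (Fin.tail ι)) := hred.drop 1
    obtain ⟨u, hpos, hu⟩ := ih htail
    have hdescent : ¬(weylCoxeterSystem a).IsLeftDescent
        ((weylCoxeterSystem a).wordProd (List.ofFn (Fin.tail ι))) (ι 0) := by
      rw [CoxeterSystem.not_isLeftDescent_iff, ← CoxeterSystem.wordProd_cons, htail.eq]
      exact hred.eq
    have hhead := (weightRealization a).pos_coroot_of_not_isLeftDescent ha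
      (μ := 1) (fun _ => one_pos) hdescent
    rw [Realization.rep_wordProd_cons]
    exact ⟨Fin.cons _ u, Fin.cases hhead hpos, hu.cons ha⟩

/-- `m` is the largest index with `i_m = i` at which `a_m(x)` attains its minimum. -/
structure IsLastArgmin (a : Fin n → Fin n → ℤ) (ι : Fin k → Fin n) (i : Fin n) (x : Fin k → ℤ)
    (m : Fin k) : Prop where
  index_eq : ι m = i
  le : ∀ m', ι m' = i → cellA a ι i x m ≤ cellA a ι i x m'
  lt_of_lt : ∀ m', ι m' = i → m < m' → cellA a ι i x m < cellA a ι i x m'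

theorem isLastArgmin_max' {x : Fin k → ℤ}
    (h : (argminSet a ι i x).Nonempty) : IsLastArgmin a ι i x ((argminSet a ι i x).max' h) := by
  obtain ⟨hindex, hmin⟩ := mem_argminSet.mp (Finset.max'_mem _ h)
  refine ⟨hindex, hmin, fun m' hm' hlt => lt_of_not_ge fun hle => ?_⟩
  exact hlt.not_ge (Finset.le_max' _ _ (mem_argminSet.mpr
    ⟨hm', fun m'' hm'' => hle.trans (hmin m'' hm'')⟩))

theorem IsLastArgmin.unique {x : Fin k → ℤ} {m m' : Fin k}
    (hm : IsLastArgmin a ι i x m) (hm' : IsLastArgmin a ι i x m') : m = m' := by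
  rcases lt_trichotomy m m' with h | h | h
  · exact absurd (hm'.le m hm.index_eq) (hm.lt_of_lt m' hm'.index_eq h).not_ge
  · exact h
  · exact absurd (hm.le m' hm'.index_eq) (hm'.lt_of_lt m hm.index_eq h).not_ge

theorem IsLastArgmin.kashF_eq {x : Fin k → ℤ} {m : Fin k}
    (hm : IsLastArgmin a ι i x m) : kashF a ι i x = Function.update x m (x m - 1) := by
  have h : (argminSet a ι i x).Nonempty := ⟨m, mem_argminSet.mpr ⟨hm.index_eq, hm.le⟩⟩
  rw [kashF, dif_pos h, (isLastArgmin_max' h).unique hm]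

theorem exists_isLastArgmin (hi : ∃ m, ι m = i) (x : Fin k → ℤ) :
    ∃ m, IsLastArgmin a ι i x m := by
  obtain ⟨m, hm, hmin⟩ := Set.exists_min_image {m | ι m = i} (cellA a ι i x) (Set.toFinite _) hi
  exact ⟨_, isLastArgmin_max' ⟨m, mem_argminSet.mpr ⟨hm, hmin⟩⟩⟩

theorem kashF_eq_cons_sub_one (hdiag : ∀ i, a i i = 2) {ι : Fin (k + 1) → Fin n} {x₀ : ℤ}
    {x : Fin k → ℤ}
    (h : ∀ m, Fin.tail ι m = ι 0 → x₀ < cellA a (Fin.tail ι) (ι 0) x m) :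
    kashF a ι (ι 0) (Fin.cons x₀ x) = Fin.cons (x₀ - 1) x := by
  have hlt (m : Fin k) (hm : ι m.succ = ι 0) :
      cellA a ι (ι 0) (Fin.cons x₀ x) 0 < cellA a ι (ι 0) (Fin.cons x₀ x) m.succ := by
    have := h m hm
    rw [cellA_zero, cellA_succ, hdiag, Fin.cons_zero, Fin.tail_cons]
    linarith
  have hargmin : IsLastArgmin a ι (ι 0) (Fin.cons x₀ x : Fin (k + 1) → ℤ) 0 :=
    ⟨rfl, Fin.cases (fun _ => le_rfl) fun m hm => (hlt m hm).le,
      Fin.cases (fun _ h => absurd h (lt_irrefl _)) fun m hm _ => hlt m hm⟩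
  rw [hargmin.kashF_eq, Fin.cons_zero, Fin.update_cons_zero]

theorem kashF_cons (hdiag : ∀ i, a i i = 2) {ι : Fin (k + 1) → Fin n} {i : Fin n} {x₀ : ℤ}
    {x : Fin k → ℤ} {m₀ : Fin k} (hm₀ : Fin.tail ι m₀ = i)
    (h : ι 0 = i → cellA a (Fin.tail ι) i x m₀ ≤ x₀) :
    kashF a ι i (Fin.cons x₀ x) = Fin.cons x₀ (kashF a (Fin.tail ι) i x) := by
  obtain ⟨m, hm⟩ := exists_isLastArgmin (a := a) ⟨m₀, hm₀⟩ x
  have hsucc (m' : Fin k) : cellA a ι i (Fin.cons x₀ x) m'.succ =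
      cellA a (Fin.tail ι) i x m' - a i (ι 0) * x₀ := by
    rw [cellA_succ, Fin.cons_zero, Fin.tail_cons]
  have hargmin : IsLastArgmin a ι i (Fin.cons x₀ x : Fin (k + 1) → ℤ) m.succ := by
    refine ⟨hm.index_eq, Fin.cases (fun h0 => ?_) fun m' hm' => ?_,
      Fin.cases (fun _ h => absurd h (Fin.not_lt_zero _)) fun m' hm' hlt => ?_⟩
    · have := (hm.le m₀ hm₀).trans (h h0)
      rw [hsucc, cellA_zero, h0, hdiag, Fin.cons_zero]
      linarith
    · rw [hsucc, hsucc]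
      exact sub_le_sub_right (hm.le m' hm') _
    · rw [hsucc, hsucc]
      exact sub_lt_sub_right (hm.lt_of_lt m' hm' (Fin.succ_lt_succ_iff.mp hlt)) _
  rw [hargmin.kashF_eq, hm.kashF_eq, Fin.cons_succ, Fin.cons_update]

/-- The step `y = f̃_i x` in `B_ι`, taken at a point where the minimum of the `a_m(x)` with
`i_m = i` is at most `T`. The bound is what allows the step to be lifted to a longer word. -/
def BoundedStep (a : Fin n → Fin n → ℤ) (ι : Fin k → Fin n) (T : ℤ) (i : Fin n)
    (x y : Fin k → ℤ) : Prop :=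
  kashF a ι i x = y ∧ ∃ m, ι m = i ∧ cellA a ι i x m ≤ T

theorem BoundedStep.mono {T T' : ℤ} (hT : T ≤ T') {x y : Fin k → ℤ}
    (h : BoundedStep a ι T i x y) : BoundedStep a ι T' i x y :=
  ⟨h.1, h.2.imp fun _ hm => ⟨hm.1, hm.2.trans hT⟩⟩

theorem BoundedStep.cons (hdiag : ∀ i, a i i = 2) {ι : Fin (k + 1) → Fin n} {T x₀ : ℤ}
    {x y : Fin k → ℤ} (h : BoundedStep a (Fin.tail ι) T i x y) (hT : ι 0 = i → T ≤ x₀) :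
    BoundedStep a ι (T - a i (ι 0) * x₀) i (Fin.cons x₀ x) (Fin.cons x₀ y) := by
  obtain ⟨rfl, m, hm, hle⟩ := h
  refine ⟨kashF_cons hdiag hm fun h0 => hle.trans (hT h0), m.succ, hm, ?_⟩
  rw [cellA_succ, Fin.tail_cons, Fin.cons_zero]
  exact sub_le_sub_right hle _

theorem BoundedStep.add_smul {c : Fin n → ℤ} {u : Fin k → ℤ} (hu : IsBalanced a ι c u) (N : ℤ)
    {T : ℤ} {x y : Fin k → ℤ} (h : BoundedStep a ι T i x y) :
    BoundedStep a ι (T + N * c i) i (x + N • u) (y + N • u) := by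
  obtain ⟨rfl, m, rfl, hle⟩ := h
  refine ⟨hu.kashF_add_smul _ x N, m, rfl, ?_⟩
  rw [cellA_add_smul, hu m]
  exact add_le_add_left hle _

theorem IsBalanced.reflTransGen_boundedStep_add_smul {c : Fin n → ℤ} {u : Fin k → ℤ}
    (hu : IsBalanced a ι c u) (N : ℤ) {T : ℤ} {x y : Fin k → ℤ}
    (h : ReflTransGen (BoundedStep a ι T i) x y) :
    ReflTransGen (BoundedStep a ι (T + N * c i) i) (x + N • u) (y + N • u) :=
  ReflTransGen.lift (· + N • u) (fun _ _ hstep => hstep.add_smul hu N) _ _ h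

-- Applying `f̃_i` never decreases an `a_m(x)` with `i_m = i` and increases one of minimal value.
theorem exists_reflTransGen_boundedStep_lt_cellA (hdiag : ∀ i, a i i = 2) (T : ℤ) (i : Fin n)
    (x : Fin k → ℤ) :
    ∃ y, ReflTransGen (BoundedStep a ι T i) x y ∧ ∀ m, ι m = i → T < cellA a ι i y m := by
  let deficit (x : Fin k → ℤ) : ℕ := ∑ m with ι m = i, (T + 1 - cellA a ι i x m).toNat
  induction hd : deficit x using Nat.strong_induction_on generalizing x with
  | _ d ih =>
  by_cases hx : ∀ m, ι m = i → T < cellA a ι i x m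
  · exact ⟨x, .refl, hx⟩
  push Not at hx
  obtain ⟨m₀, hm₀, hle₀⟩ := hx
  obtain ⟨m, hm⟩ := exists_isLastArgmin (a := a) ⟨m₀, hm₀⟩ x
  have hle := (hm.le m₀ hm₀).trans hle₀
  have hstep : BoundedStep a ι T i x (Function.update x m (x m - 1)) :=
    ⟨hm.kashF_eq, m, hm.index_eq, hle⟩
  have hdeficit : deficit (Function.update x m (x m - 1)) < d := by
    rw [← hd]
    refine Finset.sum_lt_sum (fun m' _ => Int.toNat_le_toNat ?_)
      ⟨m, Finset.mem_filter_univ _ |>.mpr hm.index_eq, ?_⟩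
    · rw [cellA_update_sub_one, hm.index_eq, hdiag]
      split_ifs <;> omega
    · rw [cellA_update_sub_one, if_pos rfl, if_neg (lt_irrefl m)]
      omega
  obtain ⟨y, hy, hlt⟩ := ih _ hdeficit _ rfl
  exact ⟨y, .head hstep hy, hlt⟩

/-- A step of the crystal graph along some `f̃_i` at a point where the minimum defining `f̃_i` is at
most `0`. -/
def NonposStep (a : Fin n → Fin n → ℤ) (ι : Fin k → Fin n) (x y : Fin k → ℤ) : Prop :=
  ∃ i, BoundedStep a ι 0 i x y

theorem NonposStep.cons_zero (hdiag : ∀ i, a i i = 2) {ι : Fin (k + 1) → Fin n} {x y : Fin k → ℤ}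
    (h : NonposStep a (Fin.tail ι) x y) :
    NonposStep a ι (Fin.cons 0 x) (Fin.cons 0 y) := by
  obtain ⟨i, hi⟩ := h
  exact ⟨i, by simpa using hi.cons hdiag (x₀ := 0) fun _ => le_rfl⟩

theorem reflTransGen_nonposStep_cons (hdiag : ∀ i, a i i = 2) {ι : Fin (k + 1) → Fin n} {x₀ : ℤ}
    (hx₀ : 0 ≤ x₀) {x y : Fin k → ℤ}
    (h : ReflTransGen (BoundedStep a (Fin.tail ι) x₀ (ι 0)) x y) :
    ReflTransGen (NonposStep a ι) (Fin.cons x₀ x) (Fin.cons x₀ y) := by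
  have hnonpos : x₀ - a (ι 0) (ι 0) * x₀ ≤ 0 := by
    rw [hdiag]
    linarith
  exact ReflTransGen.lift (p := NonposStep a ι) (Fin.cons x₀)
    (fun _ _ hstep => ⟨ι 0, (hstep.cons hdiag fun _ => le_rfl).mono hnonpos⟩) _ _ h

theorem reflTransGen_nonposStep_cons_zero (hdiag : ∀ i, a i i = 2) {ι : Fin (k + 1) → Fin n}
    {x₀ : ℤ} (hx₀ : 0 ≤ x₀) {x : Fin k → ℤ}
    (h : ∀ m, Fin.tail ι m = ι 0 → x₀ < cellA a (Fin.tail ι) (ι 0) x m) :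
    ReflTransGen (NonposStep a ι) (Fin.cons x₀ x) (Fin.cons 0 x) := by
  induction x₀, hx₀ using Int.leInduction with
  | base => exact .refl
  | succ x₀ hx₀ ih =>
    refine .head ⟨ι 0, ?_, 0, rfl, ?_⟩ (ih fun m hm => (lt_add_one x₀).trans (h m hm))
    · rw [kashF_eq_cons_sub_one hdiag h, add_sub_cancel_right]
    · rw [cellA_zero, Fin.cons_zero]
      linarith

theorem exists_forall_ge_reflTransGen_nonposStep (hdiag : ∀ i, a i i = 2) {k : ℕ}
    {ι : Fin k → Fin n} {c : Fin n → ℤ} {u : Fin k → ℤ} (hpos : ∀ m, 0 < u m)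
    (hu : IsBalanced a ι c u) (x : Fin k → ℤ) :
    ∃ N₀ : ℤ, ∀ N ≥ N₀, ReflTransGen (NonposStep a ι) (x + N • u) 0 := by
  induction k generalizing c with
  | zero => exact ⟨0, fun _ _ => Subsingleton.elim (0 : Fin 0 → ℤ) _ ▸ .refl⟩
  | succ k ih =>
    obtain ⟨y, hxy, hy⟩ := exists_reflTransGen_boundedStep_lt_cellA (ι := Fin.tail ι) hdiag (x 0)
      (ι 0) (Fin.tail x)
    obtain ⟨N₁, hN₁⟩ := ih (u := Fin.tail u) (fun m => hpos m.succ) hu.tail y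
    refine ⟨max N₁ |x 0|, fun N hN => ?_⟩
    obtain ⟨hNN₁, hNx⟩ := max_le_iff.mp hN
    have hhead : 0 ≤ x 0 + N * u 0 := by
      have := le_mul_of_one_le_right ((abs_nonneg _).trans hNx) (hpos 0)
      linarith [neg_abs_le (x 0)]
    have hvalue : c (ι 0) + a (ι 0) (ι 0) * u 0 = u 0 := by
      rw [← hu 0, cellA_zero, hdiag]
      ring
    have hclimb := hu.tail.reflTransGen_boundedStep_add_smul N hxy
    have hlt (m : Fin k) (hm : Fin.tail ι m = ι 0) :
        x 0 + N * u 0 < cellA a (Fin.tail ι) (ι 0) (y + N • Fin.tail u) m := by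
      rw [cellA_add_smul, hu.tail.cellA_eq hm, hvalue]
      exact add_lt_add_left (hy m hm) _
    rw [hvalue] at hclimb
    rw [← Fin.cons_self_tail (x + N • u), ← Fin.cons_self_tail (0 : Fin (k + 1) → ℤ)]
    exact ((reflTransGen_nonposStep_cons hdiag hhead hclimb).trans
      (reflTransGen_nonposStep_cons_zero hdiag hhead hlt)).trans
      (ReflTransGen.lift (Fin.cons 0) (fun _ _ h => h.cons_zero hdiag) _ _ (hN₁ N hNN₁))

instance : Std.Symm (cellEdge a ι) where
  symm _ _ := fun ⟨i, hi, h⟩ => ⟨i, hi, h.symm⟩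

theorem NonposStep.cellEdge {x y : Fin k → ℤ} : NonposStep a ι x y → cellEdge a ι x y :=
  fun ⟨i, hkash, m, hm, _⟩ => ⟨i, ⟨m, hm⟩, .inl hkash⟩

theorem IsBalanced.reflTransGen_cellEdge_add_smul {c : Fin n → ℤ} {u : Fin k → ℤ}
    (hu : IsBalanced a ι c u) (N : ℤ) {x y : Fin k → ℤ} (h : ReflTransGen (cellEdge a ι) x y) :
    ReflTransGen (cellEdge a ι) (x + N • u) (y + N • u) := by
  refine ReflTransGen.lift (· + N • u) (fun x y hxy => ?_) _ _ h
  obtain ⟨i, hi, hkash⟩ := hxy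
  refine ⟨i, hi, ?_⟩
  simpa only [hu.kashF_add_smul, add_left_inj] using hkash

theorem reflTransGen_cellEdge_of_pos_isBalanced (hdiag : ∀ i, a i i = 2) {c : Fin n → ℤ}
    {u : Fin k → ℤ} (hpos : ∀ m, 0 < u m) (hu : IsBalanced a ι c u) (x y : Fin k → ℤ) :
    ReflTransGen (cellEdge a ι) x y := by
  obtain ⟨N₁, hN₁⟩ := exists_forall_ge_reflTransGen_nonposStep hdiag hpos hu x
  obtain ⟨N₂, hN₂⟩ := exists_forall_ge_reflTransGen_nonposStep hdiag hpos hu y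
  have hedge : NonposStep a ι ≤ cellEdge a ι := fun _ _ => NonposStep.cellEdge
  have hx := ReflTransGen.mono hedge _ _ (hN₁ (max N₁ N₂) (le_max_left _ _))
  have hy := ReflTransGen.mono hedge _ _ (hN₂ (max N₁ N₂) (le_max_right _ _))
  simpa only [add_assoc, ← add_smul, add_neg_cancel, zero_smul, add_zero] using
    hu.reflTransGen_cellEdge_add_smul (-max N₁ N₂) (hx.trans (symm hy))

end Cellular

theorem cellular_crystal_connected_general {n k : ℕ} {a : Fin n → Fin n → ℤ}
    (ha : IsGeneralizedCartanMatrix a) (ι : Fin k → Fin n) (hred : IsReducedList a (List.ofFn ι))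
    (x y : Fin k → ℤ) : Relation.ReflTransGen (cellEdge a ι) x y := by
  obtain ⟨u, hpos, hu⟩ := exists_pos_isBalanced ha (hred.isReduced ha)
  exact reflTransGen_cellEdge_of_pos_isBalanced ha.diag hpos hu x y

/-- For any Cartan matrix of a finite-dimensional complex simple
Lie algebra and any reduced word `ι` of a Weyl group element, the cellular
crystal `B_ι` is connected. -/
theorem cellular_crystal_connected {n k : ℕ} (C : SimpleCartanMatrix n)
    (ι : Fin k → Fin n) (hred : IsReducedList C.a (List.ofFn ι)) :
    ∀ x y : Fin k → ℤ, Relation.ReflTransGen (cellEdge C.a ι) x y :=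
  cellular_crystal_connected_general ⟨C.diag, C.offdiag_nonpos, C.zero_symm⟩ ι hred
end

section
/- Let ι = (i_1,…,i_N) be a reduced word for the longest element w_0 of the Weyl group. For 1 ≤ k ≤ N set α^{(k)} = s_{i_N} s_{i_{N−1}} ⋯ s_{i_{k+1}}(α_{i_k}) in the root system of the Langlands dual algebra, and write α^{(k)} = ∑_{i=1}^n m^{(k)}_i α_i with m^{(k)}_i ∈ ℤ_{≥0}. Then ℋ_ι = { (∑_{i=1}^n m^{(1)}_i h_i, ∑_{i=1}^n m^{(2)}_i h_i, …, ∑_{i=1}^n m^{(N)}_i h_i) : (h_1,…,h_n) ∈ ℤ^n }. -/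
/-- A word is a reduced word for the longest element of the Weyl group iff it is
reduced and of maximal length among all reduced words. -/
def IsLongestWord {n : ℕ} (a : Fin n → Fin n → ℤ) (l : List (Fin n)) : Prop :=
  IsReducedList a l ∧ ∀ l' : List (Fin n), IsReducedList a l' → l'.length ≤ l.length

/-- The linear form `β_k(x) = x_k + ∑_{k<j<k⁺} a_{i_k,i_j} x_j + x_{k⁺}`, where
`k⁺` is the first index after `k` carrying the same letter as `i_k`
(junk value `0` if `k⁺` does not exist). -/
def betaFn {n N : ℕ} (a : Fin n → Fin n → ℤ) (ι : Fin N → Fin n) (k : Fin N)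
    (x : Fin N → ℤ) : ℤ :=
  if h : (Finset.univ.filter (fun l => k < l ∧ ι l = ι k)).Nonempty then
    x k + (∑ j ∈ Finset.univ.filter
        (fun j => k < j ∧ j < (Finset.univ.filter (fun l => k < l ∧ ι l = ι k)).min' h),
        a (ι k) (ι j) * x j)
      + x ((Finset.univ.filter (fun l => k < l ∧ ι l = ι k)).min' h)
  else 0

/-- The set `ℋ_ι = {x ∈ ℤ^N : β_k(x) = 0 for every k such that k⁺ ≤ N}`. -/
def Hset {n N : ℕ} (a : Fin n → Fin n → ℤ) (ι : Fin N → Fin n) : Set (Fin N → ℤ) :=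
  {x | ∀ k : Fin N, (∃ l, k < l ∧ ι l = ι k) → betaFn a ι k x = 0}

/-- The simple reflection of the Langlands dual root system, acting on the dual
root lattice (tensored with ℚ) by `s_i(α_j) = α_j - a_{ji} α_i`. -/
def sReflDual {n : ℕ} (a : Fin n → Fin n → ℤ) (i : Fin n) : (Fin n → ℚ) → (Fin n → ℚ) :=
  fun v => v - (∑ j, (a j i : ℚ) * v j) • (Pi.single i 1 : Fin n → ℚ)

/-- The positive root `α^{(k)} = s_{i_N} s_{i_{N-1}} ⋯ s_{i_{k+1}}(α_{i_k})` of
the Langlands dual root system, expressed in coordinates with respect to the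
simple roots `α_1,…,α_n` (so its `i`-th coordinate is `m^{(k)}_i`). -/
def alphaK {n N : ℕ} (a : Fin n → Fin n → ℤ) (ι : Fin N → Fin n) (k : Fin N) :
    Fin n → ℚ :=
  ((List.finRange N).filter (fun l => k < l)).foldl
    (fun v l => sReflDual a (ι l) v) (Pi.single (ι k) 1 : Fin n → ℚ)

/-!
For `x ∈ ℤ^N` put `γ_k(x) = x_k + ∑_{j>k} a_{i_k,i_j} x_j`.  Since `a_{ii} = 2`, the forms `β` are
differences: `β_k = γ_k - γ_{k⁺}`.  Hence `x ∈ ℋ_ι` iff `γ_k(x)` depends only on the letter `i_k`,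
i.e. iff `γ_k(x) = h_{i_k}` for some `h ∈ ℤ^n`.  On the other hand, expanding
`s_{i_N} ⋯ s_{i_{k+1}}(α_i)` one reflection at a time gives the vector identity `γ_k(α) = α_{i_k}`
for the sequence `α = (α^{(1)}, …, α^{(N)})`.  Pairing with `h` turns it into
`γ_k(⟨α, h⟩) = h_{i_k}`, and `γ` is unitriangular, hence injective, so `⟨α, h⟩` is the only `x`
with `γ_k(x) = h_{i_k}` for all `k`.
-/

section TailForm

variable {I σ M M' : Type*} [AddCommGroup M] [AddCommGroup M'] (a : σ → σ → ℤ) (ι : I → σ)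

/-- The form `γ_k(x) = x_k + ∑_{j>k} a_{i_k,i_j} x_j`, which is `β_k` with the sum running to the
end of the word.  The entries of `x` lie in an arbitrary abelian group, so that `γ` applies to
sequences of integers as well as to sequences of roots. -/
def tailForm [Preorder I] [LocallyFiniteOrderTop I] (x : I → M) (k : I) : M :=
  x k + ∑ j ∈ Finset.Ioi k, a (ι k) (ι j) • x j

theorem map_tailForm [Preorder I] [LocallyFiniteOrderTop I] (f : M →+ M') (x : I → M) (k : I) :
    f (tailForm a ι x k) = tailForm a ι (fun j => f (x j)) k := by
  simp only [tailForm, map_add, map_sum, map_zsmul]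

theorem tailForm_injective [Preorder I] [LocallyFiniteOrderTop I] [WellFoundedGT I] :
    Function.Injective (tailForm a ι : (I → M) → I → M) := by
  intro x y hxy
  funext k
  induction k using WellFoundedGT.induction with
  | ind k ih =>
    have htail : ∑ j ∈ Finset.Ioi k, a (ι k) (ι j) • x j =
        ∑ j ∈ Finset.Ioi k, a (ι k) (ι j) • y j :=
      Finset.sum_congr rfl fun j hj => by rw [ih j (Finset.mem_Ioi.1 hj)]
    have hk := congrFun hxy k
    rwa [tailForm, tailForm, htail, add_left_inj] at hk

theorem tailForm_sub_tailForm [LinearOrder I] [LocallyFiniteOrder I] [LocallyFiniteOrderTop I]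
    (x : I → M) {k p : I} (hkp : k < p) (hp : ι p = ι k) (hdiag : a (ι k) (ι k) = 2) :
    tailForm a ι x k - tailForm a ι x p =
      x k + ∑ j ∈ Finset.Ioo k p, a (ι k) (ι j) • x j + x p := by
  have hsplit : ∑ j ∈ Finset.Ioi k, a (ι k) (ι j) • x j =
      ∑ j ∈ Finset.Ioo k p, a (ι k) (ι j) • x j +
        ((2 : ℤ) • x p + ∑ j ∈ Finset.Ioi p, a (ι k) (ι j) • x j) := by
    have hlt : (Finset.Ioi k).filter (· < p) = Finset.Ioo k p := by
      ext j; simp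
    have hge : (Finset.Ioi k).filter (¬ · < p) = Finset.Ici p := by
      ext j; simpa using fun hj => hkp.trans_le hj
    rw [← Finset.sum_filter_add_sum_filter_not _ (· < p), hlt, hge, ← Finset.add_sum_Ioi_eq_sum_Ici,
      hp, hdiag]
  rw [tailForm, tailForm, hsplit, hp]
  abel

end TailForm

theorem exists_isLeast_of_nonempty {I : Type*} [LinearOrder I] [WellFoundedLT I] {s : Set I}
    (hs : s.Nonempty) : ∃ p, IsLeast s p :=
  (exists_minimal_of_wellFoundedLT (· ∈ s) hs).imp fun _ => minimal_iff_isLeast.1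

theorem factorsThrough_iff_forall_isLeast {I σ β : Type*} [LinearOrder I] [Finite I]
    {f : I → β} {ι : I → σ} :
    f.FactorsThrough ι ↔ ∀ k p, IsLeast {l | k < l ∧ ι l = ι k} p → f k = f p := by
  refine ⟨fun hf k p hp => hf hp.1.2.symm, fun hf => ?_⟩
  have hlt : ∀ k l, k < l → ι l = ι k → f k = f l := by
    intro k
    induction k using WellFoundedGT.induction with
    | ind k ih =>
      intro l hkl hl
      obtain ⟨p, hp⟩ := exists_isLeast_of_nonempty (s := {l | k < l ∧ ι l = ι k}) ⟨l, hkl, hl⟩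
      rw [hf k p hp]
      rcases (hp.2 ⟨hkl, hl⟩).eq_or_lt with rfl | hpl
      · rfl
      · exact ih p hp.1.1 l hpl (hl.trans hp.1.2.symm)
  intro k l hkl
  rcases lt_trichotomy k l with h | rfl | h
  · exact hlt k l h hkl.symm
  · rfl
  · exact (hlt l k h hkl).symm

section Word

variable {n N : ℕ} (a : Fin n → Fin n → ℤ)

theorem betaFn_eq_of_isLeast (ι : Fin N → Fin n) (x : Fin N → ℤ) {k p : Fin N}
    (hp : IsLeast {l | k < l ∧ ι l = ι k} p) :
    betaFn a ι k x = x k + ∑ j ∈ Finset.Ioo k p, a (ι k) (ι j) * x j + x p := by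
  have hne : (Finset.univ.filter fun l => k < l ∧ ι l = ι k).Nonempty := ⟨p, by simpa using hp.1⟩
  have hmin : (Finset.univ.filter fun l => k < l ∧ ι l = ι k).min' hne = p :=
    (Finset.isLeast_min' _ hne).unique (by simpa using hp)
  have hIoo : (Finset.univ.filter fun j => k < j ∧ j < p) = Finset.Ioo k p := by
    ext j; simp
  rw [betaFn, dif_pos hne, hmin, hIoo]

theorem mem_Hset_iff_forall_isLeast (ι : Fin N → Fin n) (x : Fin N → ℤ) :
    x ∈ Hset a ι ↔ ∀ k p, IsLeast {l | k < l ∧ ι l = ι k} p → betaFn a ι k x = 0 :=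
  ⟨fun hx k p hp => hx k ⟨p, hp.1⟩, fun hx k hk =>
    let ⟨p, hp⟩ := exists_isLeast_of_nonempty hk
    hx k p hp⟩

theorem mem_Hset_iff_factorsThrough (hdiag : ∀ i, a i i = 2) (ι : Fin N → Fin n) (x : Fin N → ℤ) :
    x ∈ Hset a ι ↔ (tailForm a ι x).FactorsThrough ι := by
  rw [mem_Hset_iff_forall_isLeast, factorsThrough_iff_forall_isLeast]
  refine forall₃_congr fun k p hp => ?_
  rw [betaFn_eq_of_isLeast a ι x hp, ← sub_eq_zero (a := tailForm a ι x k),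
    tailForm_sub_tailForm a ι x hp.1.1 hp.1.2 (hdiag _)]
  rfl

/-- The dual simple reflection `sReflDual a i` as a linear map. -/
def dualReflection (i : Fin n) : Module.End ℚ (Fin n → ℚ) :=
  Module.preReflection (Pi.single i 1) (dotProductBilin ℚ ℚ fun j => (a j i : ℚ))

theorem dualReflection_apply (i : Fin n) (v : Fin n → ℚ) :
    dualReflection a i v = sReflDual a i v :=
  Module.preReflection_apply ..

theorem dualReflection_single (i j : Fin n) :
    dualReflection a j (Pi.single i 1) = Pi.single i 1 - a i j • Pi.single j 1 := by
  simp [dualReflection_apply, sReflDual, Pi.single_apply, ← Int.cast_smul_eq_zsmul ℚ]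

/-- The linear map `s_{i_N} ⋯ s_{i_1}` attached to a word `(i_1, …, i_N)`: as in `alphaK`, the first
letter acts first. -/
def dualWordMap (l : List (Fin n)) : Module.End ℚ (Fin n → ℚ) :=
  (l.reverse.map (dualReflection a)).prod

theorem dualWordMap_cons (i : Fin n) (l : List (Fin n)) :
    dualWordMap a (i :: l) = dualWordMap a l * dualReflection a i := by
  simp [dualWordMap]

theorem dualWordMap_apply (l : List (Fin n)) (v : Fin n → ℚ) :
    dualWordMap a l v = l.foldl (fun w i => sReflDual a i w) v := by
  induction l generalizing v with
  | nil => rfl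
  | cons i l ih => rw [dualWordMap_cons, Module.End.mul_apply, ih, dualReflection_apply]; rfl

theorem alphaK_zero (ι : Fin (N + 1) → Fin n) :
    alphaK a ι 0 = dualWordMap a (List.ofFn (Fin.tail ι)) (Pi.single (ι 0) 1) := by
  rw [dualWordMap_apply, alphaK, List.finRange_succ, List.ofFn_eq_map, List.foldl_map]
  simp [List.filter_map, List.foldl_map, Function.comp_def, Fin.tail]

theorem alphaK_succ (ι : Fin (N + 1) → Fin n) (k : Fin N) :
    alphaK a ι k.succ = alphaK a (Fin.tail ι) k := by
  simp [alphaK, List.finRange_succ, List.filter_map, List.foldl_map, Function.comp_def, Fin.tail]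

theorem dualWordMap_single (ι : Fin N → Fin n) (i : Fin n) :
    dualWordMap a (List.ofFn ι) (Pi.single i 1) =
      Pi.single i 1 - ∑ k, a i (ι k) • alphaK a ι k := by
  induction N with
  | zero => simp [dualWordMap]
  | succ N ih =>
    calc dualWordMap a (List.ofFn ι) (Pi.single i 1)
        = dualWordMap a (List.ofFn (Fin.tail ι))
            (Pi.single i 1 - a i (ι 0) • Pi.single (ι 0) 1) := by
          rw [List.ofFn_succ, dualWordMap_cons, Module.End.mul_apply, dualReflection_single]
          rfl
      _ = Pi.single i 1 - ∑ k, a i (Fin.tail ι k) • alphaK a (Fin.tail ι) k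
            - a i (ι 0) • alphaK a ι 0 := by
          rw [map_sub, map_zsmul, ih, alphaK_zero]
      _ = Pi.single i 1 - ∑ k, a i (ι k) • alphaK a ι k := by
          simp only [Fin.sum_univ_succ, alphaK_succ, Fin.tail]
          abel

theorem tailForm_alphaK (ι : Fin N → Fin n) (k : Fin N) :
    tailForm a ι (alphaK a ι) k = Pi.single (ι k) 1 := by
  induction N with
  | zero => exact k.elim0
  | succ N ih =>
    cases k using Fin.cases with
    | zero =>
      rw [tailForm, Fin.sum_Ioi_zero, alphaK_zero, dualWordMap_single]
      simp only [alphaK_succ, Fin.tail, sub_add_cancel]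
    | succ k =>
      simpa only [tailForm, Fin.sum_Ioi_succ, alphaK_succ, Fin.tail] using ih (Fin.tail ι) k

theorem tailForm_alphaK_dotProduct (ι : Fin N → Fin n) (h : Fin n → ℚ) (k : Fin N) :
    tailForm a ι (fun j => alphaK a ι j ⬝ᵥ h) k = h (ι k) := by
  calc tailForm a ι (fun j => alphaK a ι j ⬝ᵥ h) k = tailForm a ι (alphaK a ι) k ⬝ᵥ h :=
        (map_tailForm a ι ((dotProductBilin ℚ ℚ).flip h).toAddMonoidHom (alphaK a ι) k).symm
    _ = h (ι k) := by rw [tailForm_alphaK, single_one_dotProduct]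

theorem tailForm_eq_comp_iff (ι : Fin N → Fin n) (x : Fin N → ℤ) (h : Fin n → ℤ) :
    tailForm a ι x = h ∘ ι ↔ ∀ k, (x k : ℚ) = ∑ i, alphaK a ι k i * (h i : ℚ) := by
  have hcast : ∀ k, ((tailForm a ι x k : ℤ) : ℚ) = tailForm a ι (fun j => (x j : ℚ)) k :=
    map_tailForm a ι (Int.castAddHom ℚ) x
  calc tailForm a ι x = h ∘ ι
    _ ↔ tailForm a ι (fun j => (x j : ℚ)) =
          tailForm a ι (fun j => alphaK a ι j ⬝ᵥ fun i => (h i : ℚ)) := by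
      simp only [funext_iff, ← hcast, tailForm_alphaK_dotProduct, Function.comp_apply, Int.cast_inj]
    _ ↔ (fun j => (x j : ℚ)) = fun j => alphaK a ι j ⬝ᵥ fun i => (h i : ℚ) :=
      (tailForm_injective a ι).eq_iff
    _ ↔ ∀ k, (x k : ℚ) = ∑ i, alphaK a ι k i * (h i : ℚ) := funext_iff

theorem Hset_eq_span_of_longest_general (hdiag : ∀ i, a i i = 2) (ι : Fin N → Fin n) :
    Hset a ι =
      {x : Fin N → ℤ | ∃ h : Fin n → ℤ,
        ∀ k : Fin N, (x k : ℚ) = ∑ i : Fin n, alphaK a ι k i * (h i : ℚ)} := by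
  ext x
  calc x ∈ Hset a ι
    _ ↔ (tailForm a ι x).FactorsThrough ι := mem_Hset_iff_factorsThrough a hdiag ι x
    _ ↔ ∃ h : Fin n → ℤ, tailForm a ι x = h ∘ ι := Function.factorsThrough_iff _
    _ ↔ ∃ h : Fin n → ℤ, ∀ k, (x k : ℚ) = ∑ i, alphaK a ι k i * (h i : ℚ) :=
      exists_congr (tailForm_eq_comp_iff a ι x)

end Word

/-- For a reduced word `ι` of the longest Weyl group element,
`ℋ_ι` consists exactly of the tuples `(∑_i m^{(1)}_i h_i, …, ∑_i m^{(N)}_i h_i)`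
with `(h_1,…,h_n) ∈ ℤ^n`, where `m^{(k)}_i` are the coordinates of `α^{(k)}`. -/
theorem Hset_eq_span_of_longest {n N : ℕ} (C : SimpleCartanMatrix n)
    (ι : Fin N → Fin n) (hlong : IsLongestWord C.a (List.ofFn ι)) :
    Hset C.a ι =
      {x : Fin N → ℤ | ∃ h : Fin n → ℤ,
        ∀ k : Fin N, (x k : ℚ) = ∑ i : Fin n, alphaK C.a ι k i * (h i : ℚ)} :=
  Hset_eq_span_of_longest_general C.a C.diag ι
end

section
/- Let ι = (i_1,…,i_N) be a reduced word for the longest element of the Weyl group of A, and let Ξ be a finite set of linear forms on ℤ^N, each of the form φ(x) = x_{k_φ} − ∑_{j : j^{(+)} ≤ N} c^{(φ)}_j β_j(x) for some index 1 ≤ k_φ ≤ N and integers c^{(φ)}_j. Set B_Ξ = {x ∈ ℤ^N : φ(x) ≥ 0 for all φ ∈ Ξ}. Then ℤ^N = ⋃_{H ∈ ℋ_ι} (H + B_Ξ); that is, every x ∈ ℤ^N can be written as x = H + y with H ∈ ℋ_ι and y ∈ B_Ξ. -/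
/-- The linear form `φ(x) = x_{k_φ} - ∑_{j : j⁺ ≤ N} c_j β_j(x)` attached to the
data `(k_φ, c)`. -/
def xiForm {n N : ℕ} (a : Fin n → Fin n → ℤ) (ι : Fin N → Fin n)
    (kphi : Fin N) (c : Fin N → ℤ) (x : Fin N → ℤ) : ℤ :=
  x kphi - ∑ j ∈ Finset.univ.filter (fun j => ∃ l, j < l ∧ ι l = ι j),
    c j * betaFn a ι j x

/-!
Every integral weight `μ` gives a point of `ℋ_ι`, whose `k`-th coordinate pairs the weight
`s_{i_{k-1}} ⋯ s_{i_1} μ` with the simple coroot of `i_k`; moving the reflections to the other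
side, it pairs `μ` with the coroot of `s_{i_1} ⋯ s_{i_{k-1}} α_{i_k}`. For a reduced word these
roots are positive, so the regular dominant weight `μ = ρ` gives an `h ∈ ℋ_ι` with positive
coordinates. Forms `φ ∈ Ξ` satisfy `φ(x + m h) = φ(x) + m h_{k_φ}`, so adding a large multiple of
`h` moves `x` into `B_Ξ`.

Positivity of the root `γ = w α_i` is proved by induction on the word, using a positive definite
invariant form. If `γ ≥ 0` but `s_j γ` is not `≥ 0`, put `x = γ_j` and `p = -(s_j γ)_j`. Both are
positive, so integrality of roots gives `1 ≤ x` and `1 ≤ p`, and integrality of coroots gives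
`|γ|² ≤ x |α_j|²` and `|γ|² ≤ p |α_j|²`. As `|γ - x α_j|² = |γ|² - x p |α_j|²` is nonnegative, all
these are equalities and `γ = α_j`. Then `s_j w s_i = w`, so the word of `s_j w s_i` is not reduced.
-/

/-- A Cartan matrix of finite type, not necessarily indecomposable: a generalized Cartan matrix
whose Weyl group is finite. Finiteness makes the zero pattern of `a` symmetric. -/
structure IsFiniteCartanMatrix {n : ℕ} (a : Fin n → Fin n → ℤ) : Prop where
  diag : ∀ i, a i i = 2
  offdiag_nonpos : ∀ i j, i ≠ j → a i j ≤ 0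
  finite_range_wProd : (Set.range (wProd a)).Finite

lemma SimpleCartanMatrix.isFiniteCartanMatrix {n : ℕ} (C : SimpleCartanMatrix n) :
    IsFiniteCartanMatrix C.a where
  diag := C.diag
  offdiag_nonpos := C.offdiag_nonpos
  finite_range_wProd := C.finiteWeyl.subset <| by
    rintro _ ⟨l, rfl⟩
    exact ⟨l, rfl⟩

section AveragedForm

variable {R V : Type*} [CommRing R] [AddCommGroup V] [Module R V]

/-- The sum of the pullbacks of a bilinear form along a finite set of endomorphisms, the standard
construction of a form invariant under a finite group. -/
def averagedForm (W : Finset (Module.End R V)) (B : LinearMap.BilinForm R V) :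
    LinearMap.BilinForm R V :=
  ∑ w ∈ W, B.comp w w

variable {W : Finset (Module.End R V)} {B : LinearMap.BilinForm R V}

lemma averagedForm_apply (u v : V) : averagedForm W B u v = ∑ w ∈ W, B (w u) (w v) := by
  simp [averagedForm]

lemma isSymm_averagedForm (hB : B.IsSymm) : (averagedForm W B).IsSymm where
  eq u v := by simp only [averagedForm_apply, hB.eq]

lemma apply_self_nonneg_of_pos [Preorder R] (hB : ∀ v ≠ 0, 0 < B v v) (v : V) : 0 ≤ B v v := by
  obtain rfl | hv := eq_or_ne v 0
  · simp
  · exact (hB v hv).le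

lemma averagedForm_self_pos [PartialOrder R] [IsOrderedCancelAddMonoid R]
    (hB : ∀ v ≠ 0, 0 < B v v) (hW : 1 ∈ W) {v : V} (hv : v ≠ 0) : 0 < averagedForm W B v v := by
  rw [averagedForm_apply]
  exact Finset.sum_pos' (fun w _ => apply_self_nonneg_of_pos hB _) ⟨1, hW, hB v hv⟩

lemma averagedForm_apply_apply_of_mul_self_eq_one {s : Module.End R V} (hs : s * s = 1)
    (hW : ∀ w ∈ W, w * s ∈ W) (u v : V) :
    averagedForm W B (s u) (s v) = averagedForm W B u v := by
  have hss (w : Module.End R V) : w * s * s = w := by rw [mul_assoc, hs, mul_one]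
  simp only [averagedForm_apply]
  exact Finset.sum_nbij' (· * s) (· * s) hW hW (fun w _ => hss w) (fun w _ => hss w)
    (fun _ _ => rfl)

end AveragedForm

lemma apply_self_mul_dual_apply_of_preReflection_invariant {R V : Type*} [CommRing R]
    [AddCommGroup V] [Module R V] {B : LinearMap.BilinForm R V} {x : V} {f : Module.Dual R V}
    (hf : f x = 2)
    (hB : ∀ u v, B (Module.preReflection x f u) (Module.preReflection x f v) = B u v) (y : V) :
    B x x * f y = 2 * B x y := by
  have h := hB x y
  rw [Module.preReflection_apply_self hf, Module.preReflection_apply] at h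
  simp only [map_neg, map_sub, map_smul, LinearMap.neg_apply, smul_eq_mul] at h
  linear_combination h

section Reflections

variable {n : ℕ} (a : Fin n → Fin n → ℤ)

/-- The simple root `α_i`; roots are given by their coordinates in the basis of simple roots. -/
abbrev simpleRoot (i : Fin n) : Fin n → ℚ := Pi.single i 1

/-- The simple coroot `α_i^∨` as a linear form on the span of the roots, with
`α_i^∨(α_j) = a_{ij}`. -/
def simpleCoroot (i : Fin n) : Module.Dual ℚ (Fin n → ℚ) :=
  ∑ j, (a i j : ℚ) • LinearMap.proj j

/-- The simple reflection `s_i` as a linear map. -/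
def simpleReflection (i : Fin n) : Module.End ℚ (Fin n → ℚ) :=
  Module.preReflection (simpleRoot i) (simpleCoroot a i)

/-- The Weyl group element represented by a word, as a linear map. -/
def wordAction (l : List (Fin n)) : Module.End ℚ (Fin n → ℚ) :=
  (l.map (simpleReflection a)).prod

lemma simpleCoroot_apply (i : Fin n) (v : Fin n → ℚ) :
    simpleCoroot a i v = ∑ j, (a i j : ℚ) * v j := by
  simp [simpleCoroot]

lemma simpleCoroot_simpleRoot (i j : Fin n) : simpleCoroot a i (simpleRoot j) = a i j := by
  simp [simpleCoroot_apply, Pi.single_apply]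

lemma simpleReflection_apply (i : Fin n) (v : Fin n → ℚ) :
    simpleReflection a i v = v - simpleCoroot a i v • simpleRoot i :=
  Module.preReflection_apply ..

lemma simpleReflection_apply_same (i : Fin n) (v : Fin n → ℚ) :
    simpleReflection a i v i = v i - simpleCoroot a i v := by
  simp [simpleReflection_apply]

lemma simpleReflection_apply_of_ne {i k : Fin n} (h : k ≠ i) (v : Fin n → ℚ) :
    simpleReflection a i v k = v k := by
  simp [simpleReflection_apply, h]

lemma wordAction_cons (i : Fin n) (l : List (Fin n)) :
    wordAction a (i :: l) = simpleReflection a i * wordAction a l := by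
  simp [wordAction]

lemma wordAction_append (l l' : List (Fin n)) :
    wordAction a (l ++ l') = wordAction a l * wordAction a l' := by
  simp [wordAction]

lemma wordAction_singleton (i : Fin n) : wordAction a [i] = simpleReflection a i := by
  simp [wordAction]

lemma coe_wordAction (l : List (Fin n)) : ⇑(wordAction a l) = wProd a l := by
  induction l with
  | nil => rfl
  | cons i l ih =>
    have hs : ⇑(simpleReflection a i) = sRefl a i := by
      funext v
      rw [simpleReflection_apply, simpleCoroot_apply, sRefl]
    rw [wordAction_cons, Module.End.mul_eq_comp, LinearMap.coe_comp, hs, ih]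
    rfl

variable {a}

lemma simpleReflection_mul_self {i : Fin n} (hi : a i i = 2) :
    simpleReflection a i * simpleReflection a i = 1 :=
  LinearMap.ext <| Module.involutive_preReflection <| by simp [simpleCoroot_simpleRoot, hi]

lemma mul_wordAction_apply_mem {r : Fin n → ℚ} {b : Fin n → Fin n → ℤ}
    (hr : ∀ k j, r k * a k j = b k j * r j) {L : AddSubgroup ℚ} {v : Fin n → ℚ}
    (hv : ∀ k, r k * v k ∈ L) (l : List (Fin n)) (k : Fin n) : r k * wordAction a l v k ∈ L := by
  induction l generalizing k with
  | nil => exact hv k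
  | cons i l ih =>
    rw [wordAction_cons, Module.End.mul_apply]
    obtain rfl | hki := eq_or_ne k i
    · have hcoroot : r k * simpleCoroot a k (wordAction a l v)
          = ∑ j, b k j • (r j * wordAction a l v j) := by
        simp only [simpleCoroot_apply, Finset.mul_sum, ← mul_assoc, hr, zsmul_eq_mul]
      rw [simpleReflection_apply_same, mul_sub, hcoroot]
      exact L.sub_mem (ih k) (L.sum_mem fun j _ => L.zsmul_mem (ih j) _)
    · rw [simpleReflection_apply_of_ne a hki]
      exact ih k

lemma mul_wordAction_simpleRoot_apply_mem_zmultiples {r : Fin n → ℚ} {b : Fin n → Fin n → ℤ}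
    (hr : ∀ k j, r k * a k j = b k j * r j) (l : List (Fin n)) (i k : Fin n) :
    r k * wordAction a l (simpleRoot i) k ∈ AddSubgroup.zmultiples (r i) := by
  refine mul_wordAction_apply_mem hr (fun k => ?_) l k
  obtain rfl | hki := eq_or_ne k i
  · simp
  · simp [hki]

end Reflections

section ReducedWords

variable {n : ℕ} {a : Fin n → Fin n → ℤ} {l l₁ l₂ : List (Fin n)}

lemma isReducedList_iff_wordAction :
    IsReducedList a l ↔ ∀ l', wordAction a l' = wordAction a l → l.length ≤ l'.length := by
  simp only [IsReducedList, ← coe_wordAction, DFunLike.coe_fn_eq]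

lemma IsReducedList.of_append_left (h : IsReducedList a (l₁ ++ l₂)) : IsReducedList a l₁ := by
  rw [isReducedList_iff_wordAction] at h ⊢
  intro l' hl'
  simpa using h (l' ++ l₂) (by rw [wordAction_append, hl', wordAction_append])

lemma IsReducedList.of_append_right (h : IsReducedList a (l₁ ++ l₂)) : IsReducedList a l₂ := by
  rw [isReducedList_iff_wordAction] at h ⊢
  intro l' hl'
  simpa using h (l₁ ++ l') (by rw [wordAction_append, hl', wordAction_append])

end ReducedWords

section InvariantForm

variable {n : ℕ} {a : Fin n → Fin n → ℤ} {B : LinearMap.BilinForm ℚ (Fin n → ℚ)}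

/-- A positive definite symmetric form on the span of the roots, invariant under the Weyl group. -/
structure IsWeylInvariantForm (a : Fin n → Fin n → ℤ) (B : LinearMap.BilinForm ℚ (Fin n → ℚ)) :
    Prop where
  isSymm : B.IsSymm
  pos : ∀ v ≠ 0, 0 < B v v
  simpleReflection_invariant :
    ∀ i u v, B (simpleReflection a i u) (simpleReflection a i v) = B u v

theorem IsFiniteCartanMatrix.exists_isWeylInvariantForm (ha : IsFiniteCartanMatrix a) :
    ∃ B, IsWeylInvariantForm a B := by
  have hfin : (Set.range (wordAction a)).Finite := by
    refine Set.Finite.of_finite_image ?_ (DFunLike.coe_injective.injOn)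
    rw [← Set.range_comp]
    convert ha.finite_range_wProd using 2
    exact funext (coe_wordAction a)
  let dot : LinearMap.BilinForm ℚ (Fin n → ℚ) := dotProductBilin ℚ ℚ
  refine ⟨averagedForm hfin.toFinset dot, isSymm_averagedForm ⟨dotProduct_comm⟩, fun v hv => ?_,
    fun i u v => ?_⟩
  · refine averagedForm_self_pos (fun u hu => ?_) (hfin.mem_toFinset.2 ⟨[], rfl⟩) hv
    change 0 < dotProduct u u
    simpa using Matrix.dotProduct_star_self_pos_iff.2 hu
  · have hs := simpleReflection_mul_self (ha.diag i)
    refine averagedForm_apply_apply_of_mul_self_eq_one hs ?_ u v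
    simp only [Set.Finite.mem_toFinset, Set.forall_mem_range]
    exact fun l => ⟨l ++ [i], by rw [wordAction_append, wordAction_singleton]⟩

namespace IsWeylInvariantForm

variable (hB : IsWeylInvariantForm a B)
include hB

lemma self_eq_zero_iff {v : Fin n → ℚ} : B v v = 0 ↔ v = 0 :=
  ⟨fun h => of_not_not fun hv => (hB.pos v hv).ne' h, fun h => by simp [h]⟩

lemma simpleRoot_self_pos (i : Fin n) : 0 < B (simpleRoot i) (simpleRoot i) :=
  hB.pos _ (by simp)

lemma wordAction_invariant (l : List (Fin n)) (u v : Fin n → ℚ) :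
    B (wordAction a l u) (wordAction a l v) = B u v := by
  induction l with
  | nil => rfl
  | cons i l ih =>
    rw [wordAction_cons, Module.End.mul_apply, Module.End.mul_apply,
      hB.simpleReflection_invariant, ih]

lemma wordAction_simpleRoot_ne_zero (l : List (Fin n)) (i : Fin n) :
    wordAction a l (simpleRoot i) ≠ 0 := by
  intro h
  have hpos := hB.simpleRoot_self_pos i
  rw [← hB.wordAction_invariant l, h] at hpos
  simp at hpos

lemma simpleRoot_self_mul_simpleCoroot {i : Fin n} (hi : a i i = 2) (v : Fin n → ℚ) :
    B (simpleRoot i) (simpleRoot i) * simpleCoroot a i v = 2 * B (simpleRoot i) v :=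
  apply_self_mul_dual_apply_of_preReflection_invariant
    (by simp [simpleCoroot_simpleRoot, hi]) (hB.simpleReflection_invariant i) v

lemma symmetrizes (hdiag : ∀ i, a i i = 2) (i j : Fin n) :
    B (simpleRoot i) (simpleRoot i) * a i j = B (simpleRoot j) (simpleRoot j) * a j i := by
  rw [← simpleCoroot_simpleRoot, ← simpleCoroot_simpleRoot,
    hB.simpleRoot_self_mul_simpleCoroot (hdiag i), hB.simpleRoot_self_mul_simpleCoroot (hdiag j),
    hB.isSymm.eq]

lemma sub_smul_simpleRoot_self {j : Fin n} (hj : a j j = 2) (v : Fin n → ℚ) :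
    B (v - v j • simpleRoot j) (v - v j • simpleRoot j)
      = B v v - v j * -(simpleReflection a j v j) * B (simpleRoot j) (simpleRoot j) := by
  have hpair := hB.simpleRoot_self_mul_simpleCoroot hj v
  rw [simpleReflection_apply_same]
  simp only [map_sub, map_smul, LinearMap.sub_apply, LinearMap.smul_apply, smul_eq_mul,
    hB.isSymm.eq v]
  linear_combination v j * hpair

lemma simpleReflection_mul_wordAction {l : List (Fin n)} {i j : Fin n} (hi : a i i = 2)
    (hj : a j j = 2) (h : wordAction a l (simpleRoot i) = simpleRoot j) :
    simpleReflection a j * wordAction a l = wordAction a l * simpleReflection a i := by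
  have hcoroot (v : Fin n → ℚ) : simpleCoroot a j (wordAction a l v) = simpleCoroot a i v := by
    refine mul_left_cancel₀ (hB.simpleRoot_self_pos j).ne' ?_
    rw [hB.simpleRoot_self_mul_simpleCoroot hj, ← h, hB.wordAction_invariant,
      hB.wordAction_invariant, hB.simpleRoot_self_mul_simpleCoroot hi]
  refine LinearMap.ext fun v => ?_
  simp only [Module.End.mul_apply, simpleReflection_apply, map_sub, map_smul, h, hcoroot]

end IsWeylInvariantForm

end InvariantForm

section PositiveRoots

lemma abs_le_abs_of_mem_zmultiples {G : Type*} [AddCommGroup G] [LinearOrder G]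
    [IsOrderedAddMonoid G] {x t : G} (hx : x ≠ 0) (h : x ∈ AddSubgroup.zmultiples t) :
    |t| ≤ |x| := by
  obtain ⟨z, rfl⟩ := AddSubgroup.mem_zmultiples_iff.1 h
  have hz : z ≠ 0 := fun hz => hx (by rw [hz, zero_zsmul])
  simpa [abs_zsmul] using zsmul_le_zsmul_left (abs_nonneg t) (Int.one_le_abs hz)

variable {n : ℕ} {a : Fin n → Fin n → ℤ} {B : LinearMap.BilinForm ℚ (Fin n → ℚ)}

lemma one_le_abs_wordAction_simpleRoot_apply {l : List (Fin n)} {i j : Fin n}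
    (h : wordAction a l (simpleRoot i) j ≠ 0) : 1 ≤ |wordAction a l (simpleRoot i) j| := by
  have hmem := mul_wordAction_simpleRoot_apply_mem_zmultiples (a := a) (r := 1) (b := a)
    (by simp) l i j
  simpa using abs_le_abs_of_mem_zmultiples (by simpa using h) hmem

-- The coordinates of the coroot of `w α_i` are the integers `|α_j|² (w α_i)_j / |α_i|²`.
lemma IsWeylInvariantForm.simpleRoot_self_le_abs_mul (hB : IsWeylInvariantForm a B)
    (hdiag : ∀ i, a i i = 2) {l : List (Fin n)} {i j : Fin n}
    (h : wordAction a l (simpleRoot i) j ≠ 0) :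
    B (simpleRoot i) (simpleRoot i)
      ≤ |wordAction a l (simpleRoot i) j| * B (simpleRoot j) (simpleRoot j) := by
  have hj := hB.simpleRoot_self_pos j
  have hmem := mul_wordAction_simpleRoot_apply_mem_zmultiples
    (r := fun k => B (simpleRoot k) (simpleRoot k)) (b := fun k j => a j k)
    (fun k j => by rw [hB.symmetrizes hdiag, mul_comm]) l i j
  have hle := abs_le_abs_of_mem_zmultiples (mul_ne_zero hj.ne' h) hmem
  rwa [abs_mul, abs_of_pos (hB.simpleRoot_self_pos i), abs_of_pos hj, mul_comm] at hle

lemma eq_one_and_eq_of_mul_mul_le {R : Type*} [CommRing R] [LinearOrder R] [IsStrictOrderedRing R]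
    {x p s t : R} (ht : 0 < t) (hx : 1 ≤ x) (hp : 1 ≤ p) (hsx : s ≤ x * t) (hsp : s ≤ p * t)
    (hs : x * p * t ≤ s) : x = 1 ∧ p = 1 ∧ s = t := by
  have hxt : 0 < x * t := by positivity
  have hpt : 0 < p * t := by positivity
  have hx1 : x = 1 := hx.antisymm' <| le_of_mul_le_mul_right (by linarith) hpt
  have hp1 : p = 1 := hp.antisymm' <| le_of_mul_le_mul_right (by linarith) hxt
  subst hx1 hp1
  exact ⟨rfl, rfl, by linarith⟩

lemma simpleCoroot_nonpos_of_apply_eq_zero {j : Fin n} (ha : ∀ k, j ≠ k → a j k ≤ 0)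
    {v : Fin n → ℚ} (hv : 0 ≤ v) (hj : v j = 0) : simpleCoroot a j v ≤ 0 := by
  rw [simpleCoroot_apply]
  refine Finset.sum_nonpos fun k _ => ?_
  obtain rfl | hjk := eq_or_ne j k
  · simp [hj]
  · exact mul_nonpos_of_nonpos_of_nonneg (by exact_mod_cast ha k hjk) (hv k)

lemma simpleReflection_apply_neg_of_not_nonneg {j : Fin n} {v : Fin n → ℚ} (hv : 0 ≤ v)
    (h : ¬ 0 ≤ simpleReflection a j v) : simpleReflection a j v j < 0 := by
  simp only [Pi.le_def, not_forall, not_le, Pi.zero_apply] at h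
  obtain ⟨k, hk⟩ := h
  obtain rfl | hkj := eq_or_ne k j
  · exact hk
  · rw [simpleReflection_apply_of_ne a hkj] at hk
    exact absurd (hv k) hk.not_ge

lemma apply_pos_of_simpleReflection_not_nonneg {j : Fin n} (ha : ∀ k, j ≠ k → a j k ≤ 0)
    {v : Fin n → ℚ} (hv : 0 ≤ v) (h : ¬ 0 ≤ simpleReflection a j v) : 0 < v j := by
  refine (hv j).lt_of_ne' fun (hj : v j = 0) => ?_
  have hneg := simpleReflection_apply_neg_of_not_nonneg hv h
  have hcoroot := simpleCoroot_nonpos_of_apply_eq_zero ha hv hj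
  rw [simpleReflection_apply_same, hj] at hneg
  linarith

theorem IsWeylInvariantForm.wordAction_simpleRoot_eq_simpleRoot_of_not_nonneg
    (hB : IsWeylInvariantForm a B) (hdiag : ∀ i, a i i = 2)
    {l : List (Fin n)} {i j : Fin n} (hoff : ∀ k, j ≠ k → a j k ≤ 0)
    (hpos : 0 ≤ wordAction a l (simpleRoot i))
    (hneg : ¬ 0 ≤ wordAction a (j :: l) (simpleRoot i)) :
    wordAction a l (simpleRoot i) = simpleRoot j := by
  have hcons : wordAction a (j :: l) (simpleRoot i)
      = simpleReflection a j (wordAction a l (simpleRoot i)) := by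
    rw [wordAction_cons, Module.End.mul_apply]
  have hx0 := apply_pos_of_simpleReflection_not_nonneg hoff hpos (hcons ▸ hneg)
  have hp0 : wordAction a (j :: l) (simpleRoot i) j < 0 :=
    hcons ▸ simpleReflection_apply_neg_of_not_nonneg hpos (hcons ▸ hneg)
  have hx := one_le_abs_wordAction_simpleRoot_apply hx0.ne'
  have hp := one_le_abs_wordAction_simpleRoot_apply hp0.ne
  have hsx := hB.simpleRoot_self_le_abs_mul hdiag hx0.ne'
  have hsp := hB.simpleRoot_self_le_abs_mul hdiag hp0.ne
  have hnorm := hB.sub_smul_simpleRoot_self (hdiag j) (wordAction a l (simpleRoot i))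
  rw [abs_of_pos hx0] at hx hsx
  rw [abs_of_neg hp0, hcons] at hp hsp
  rw [hB.wordAction_invariant] at hnorm
  obtain ⟨hx1, hp1, hs⟩ := eq_one_and_eq_of_mul_mul_le (hB.simpleRoot_self_pos j) hx hp hsx hsp
    (sub_nonneg.1 (hnorm ▸ apply_self_nonneg_of_pos hB.pos _))
  rw [hx1, hp1, hs, one_smul, one_mul, one_mul, sub_self, hB.self_eq_zero_iff] at hnorm
  exact sub_eq_zero.1 hnorm

theorem IsReducedList.wordAction_simpleRoot_pos (ha : IsFiniteCartanMatrix a) {l : List (Fin n)}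
    {i : Fin n} (h : IsReducedList a (l ++ [i])) : 0 < wordAction a l (simpleRoot i) := by
  obtain ⟨B, hB⟩ := ha.exists_isWeylInvariantForm
  refine lt_of_le_of_ne' ?_ (hB.wordAction_simpleRoot_ne_zero l i)
  induction l with
  | nil => exact Pi.single_nonneg.2 zero_le_one
  | cons j l ih =>
    by_contra hneg
    have hroot := hB.wordAction_simpleRoot_eq_simpleRoot_of_not_nonneg ha.diag
      (ha.offdiag_nonpos j) (ih (h.of_append_right (l₁ := [j]))) hneg
    have hshorter : wordAction a l = wordAction a (j :: l ++ [i]) := by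
      rw [wordAction_append, wordAction_cons, wordAction_singleton,
        hB.simpleReflection_mul_wordAction (ha.diag i) (ha.diag j) hroot, mul_assoc,
        simpleReflection_mul_self (ha.diag i), mul_one]
    have hlen := isReducedList_iff_wordAction.1 h l hshorter
    simp at hlen

end PositiveRoots

section WeightVector

variable {n N : ℕ} (a : Fin n → Fin n → ℤ) (μ : Fin n → ℤ)

/-- The weight `s_{i_k} ⋯ s_{i_1} μ` for the word `i_1, …, i_k`, where weights are given by their
coordinates in the basis of fundamental weights, so that `(s_i μ)_j = μ_j - a_{ji} μ_i`. -/
def weightAlong (l : List (Fin n)) : Fin n → ℤ :=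
  l.foldl (fun ν i j => ν j - a j i * ν i) μ

/-- The point of `ℋ_ι` attached to a weight `μ`: its `k`-th coordinate is the pairing of
`s_{i_{k-1}} ⋯ s_{i_1} μ` with the simple coroot of `i_k`. -/
def weightVector (ι : Fin N → Fin n) (k : Fin N) : ℤ :=
  weightAlong a μ ((List.ofFn ι).take k) (ι k)

lemma weightAlong_concat (l : List (Fin n)) (i j : Fin n) :
    weightAlong a μ (l ++ [i]) j = weightAlong a μ l j - a j i * weightAlong a μ l i := by
  simp [weightAlong]

lemma take_ofFn_succ {α : Type*} (f : Fin N → α) (k : Fin N) :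
    (List.ofFn f).take (k + 1) = (List.ofFn f).take k ++ [f k] := by
  rw [List.take_succ_eq_append_getElem (by simp), List.getElem_ofFn]

lemma weightAlong_take_sub (ι : Fin N → Fin n) (i : Fin n) {p q : ℕ} (hpq : p ≤ q) (hq : q ≤ N) :
    weightAlong a μ ((List.ofFn ι).take p) i - weightAlong a μ ((List.ofFn ι).take q) i
      = ∑ j ∈ Finset.univ.filter fun j : Fin N => p ≤ j ∧ j < q,
        a i (ι j) * weightVector a μ ι j := by
  induction q, hpq using Nat.le_induction with
  | base =>
    rw [sub_self, Finset.sum_eq_zero]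
    intro j hj
    have := (Finset.mem_filter.1 hj).2
    omega
  | succ q hpq ih =>
    have hinsert : Finset.univ.filter (fun j : Fin N => p ≤ j ∧ j < q + 1)
        = insert ⟨q, hq⟩ (Finset.univ.filter fun j : Fin N => p ≤ j ∧ j < q) := by
      ext j
      simp only [Finset.mem_filter_univ, Finset.mem_insert, Fin.ext_iff]
      omega
    rw [hinsert, Finset.sum_insert (by simp), ← ih (by omega), take_ofFn_succ ι ⟨q, hq⟩,
      weightAlong_concat, weightVector]
    ring

variable {a}

theorem weightVector_mem_Hset (hdiag : ∀ i, a i i = 2) (ι : Fin N → Fin n) :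
    weightVector a μ ι ∈ Hset a ι := by
  rintro k ⟨l, hkl⟩
  have hne : (Finset.univ.filter fun l => k < l ∧ ι l = ι k).Nonempty := ⟨l, by simpa using hkl⟩
  rw [betaFn, dif_pos hne]
  set q := (Finset.univ.filter fun l => k < l ∧ ι l = ι k).min' hne
  obtain ⟨hkq, hq⟩ : k < q ∧ ι q = ι k := (Finset.mem_filter.1 (Finset.min'_mem _ hne)).2
  have hsum := weightAlong_take_sub a μ ι (ι k) (p := k + 1) hkq q.2.le
  have hk : weightAlong a μ ((List.ofFn ι).take (k + 1)) (ι k) = -weightVector a μ ι k := by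
    rw [take_ofFn_succ, weightAlong_concat, hdiag, weightVector]
    ring
  have hqv : weightVector a μ ι q = weightAlong a μ ((List.ofFn ι).take q) (ι k) := by
    rw [weightVector, hq]
  simp only [Order.add_one_le_iff, Fin.val_fin_lt] at hsum
  linarith

-- `d j * v j` are the coordinates of `v` in the basis of simple coroots, up to a common factor.
lemma sum_weightAlong_mul {d : Fin n → ℚ} (hd : ∀ i j, d i * a i j = d j * a j i)
    (l : List (Fin n)) (v : Fin n → ℚ) :
    ∑ j, weightAlong a μ l j * (d j * v j) = ∑ j, μ j * (d j * wordAction a l v j) := by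
  induction l using List.reverseRecOn generalizing v with
  | nil => rfl
  | append_singleton l i ih =>
    rw [wordAction_append, wordAction_singleton, Module.End.mul_apply, ← ih]
    have hcoroot : d i * simpleCoroot a i v = ∑ j, d j * a j i * v j := by
      simp only [simpleCoroot_apply, Finset.mul_sum, ← mul_assoc, hd i]
    have hreflect : ∑ j, weightAlong a μ l j * (d j * simpleReflection a i v j)
        = ∑ j, weightAlong a μ l j * (d j * v j)
          - weightAlong a μ l i * (d i * simpleCoroot a i v) := by
      simp [simpleReflection_apply, mul_sub, Finset.sum_sub_distrib, Pi.single_apply]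
    rw [hreflect, hcoroot, Finset.mul_sum, ← Finset.sum_sub_distrib]
    refine Finset.sum_congr rfl fun j _ => ?_
    rw [weightAlong_concat]
    push_cast
    ring

variable {μ}

theorem weightVector_pos (ha : IsFiniteCartanMatrix a) (hμ : ∀ i, 0 < μ i) {ι : Fin N → Fin n}
    (hι : IsReducedList a (List.ofFn ι)) (k : Fin N) : 0 < weightVector a μ ι k := by
  obtain ⟨B, hB⟩ := ha.exists_isWeylInvariantForm
  have hd := hB.simpleRoot_self_pos
  have hroot : 0 < wordAction a ((List.ofFn ι).take k) (simpleRoot (ι k)) := by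
    refine IsReducedList.wordAction_simpleRoot_pos ha ?_
    rw [← take_ofFn_succ]
    exact IsReducedList.of_append_left (by rwa [List.take_append_drop])
  obtain ⟨hnonneg, j, hj⟩ := Pi.lt_def.1 hroot
  have hsum : 0 < ∑ j, μ j * (B (simpleRoot j) (simpleRoot j) *
      wordAction a ((List.ofFn ι).take k) (simpleRoot (ι k)) j) := by
    have hμ' (i : Fin n) : (0 : ℚ) < μ i := by exact_mod_cast hμ i
    exact Finset.sum_pos'
      (fun j _ => mul_nonneg (hμ' j).le (mul_nonneg (hd j).le (hnonneg j)))
      ⟨j, Finset.mem_univ j, mul_pos (hμ' j) (mul_pos (hd j) hj)⟩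
  rw [← sum_weightAlong_mul μ (hB.symmetrizes ha.diag)] at hsum
  have hcoord : 0 < (weightVector a μ ι k : ℚ) * B (simpleRoot (ι k)) (simpleRoot (ι k)) := by
    simpa [weightVector, Pi.single_apply] using hsum
  exact_mod_cast pos_of_mul_pos_left hcoord (hd _).le

end WeightVector

section Translates

variable {n N : ℕ} {a : Fin n → Fin n → ℤ} {ι : Fin N → Fin n} {h : Fin N → ℤ}

lemma betaFn_add (k : Fin N) (x y : Fin N → ℤ) :
    betaFn a ι k (x + y) = betaFn a ι k x + betaFn a ι k y := by
  unfold betaFn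
  split_ifs
  · simp only [Pi.add_apply, mul_add, Finset.sum_add_distrib]
    ring
  · rfl

lemma betaFn_zsmul (k : Fin N) (m : ℤ) (x : Fin N → ℤ) :
    betaFn a ι k (m • x) = m * betaFn a ι k x := by
  unfold betaFn
  split_ifs
  · simp only [Pi.smul_apply, smul_eq_mul, mul_add, Finset.mul_sum, mul_left_comm]
  · rw [mul_zero]

lemma zsmul_mem_Hset (hh : h ∈ Hset a ι) (m : ℤ) : m • h ∈ Hset a ι := fun k hk => by
  rw [betaFn_zsmul, hh k hk, mul_zero]

lemma xiForm_add_of_mem_Hset (hh : h ∈ Hset a ι) (k : Fin N) (c x : Fin N → ℤ) :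
    xiForm a ι k c (x + h) = xiForm a ι k c x + h k := by
  have hsum : ∑ j with ∃ l, j < l ∧ ι l = ι j, c j * betaFn a ι j (x + h)
      = ∑ j with ∃ l, j < l ∧ ι l = ι j, c j * betaFn a ι j x :=
    Finset.sum_congr rfl fun j hj => by
      rw [betaFn_add, hh j (Finset.mem_filter.1 hj).2, add_zero]
  rw [xiForm, xiForm, hsum, Pi.add_apply]
  ring

lemma exists_forall_xiForm_nonneg_of_pos (hh : h ∈ Hset a ι) (hpos : ∀ k, 0 < h k) {F : Type*}
    [Finite F] (kphi : F → Fin N) (c : F → Fin N → ℤ) (x : Fin N → ℤ) :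
    ∃ m : ℤ, ∀ f, 0 ≤ xiForm a ι (kphi f) (c f) (x + m • h) := by
  obtain ⟨m, hm⟩ := Finite.exists_le fun f => |xiForm a ι (kphi f) (c f) x|
  refine ⟨m, fun f => ?_⟩
  have hle : m ≤ m * h (kphi f) :=
    le_mul_of_one_le_right ((abs_nonneg _).trans (hm f)) (hpos _)
  rw [xiForm_add_of_mem_Hset (zsmul_mem_Hset hh m), Pi.smul_apply, smul_eq_mul]
  linarith [neg_le_of_abs_le (hm f)]

end Translates

theorem union_of_translates_covers_general {n N : ℕ} {a : Fin n → Fin n → ℤ}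
    (ha : IsFiniteCartanMatrix a) {ι : Fin N → Fin n} (hι : IsReducedList a (List.ofFn ι))
    {F : Type*} [Finite F] (kphi : F → Fin N) (c : F → Fin N → ℤ) (x : Fin N → ℤ) :
    ∃ H ∈ Hset a ι, ∃ y ∈ {y : Fin N → ℤ | ∀ f : F, 0 ≤ xiForm a ι (kphi f) (c f) y},
      x = H + y := by
  have hmem := weightVector_mem_Hset 1 ha.diag ι
  have hpos := weightVector_pos (μ := 1) ha (fun _ => one_pos) hι
  obtain ⟨m, hm⟩ := exists_forall_xiForm_nonneg_of_pos hmem hpos kphi c x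
  exact ⟨(-m) • weightVector a 1 ι, zsmul_mem_Hset hmem _, x + m • weightVector a 1 ι, hm,
    by rw [neg_smul]; abel⟩

/-- Every `x ∈ ℤ^N` can be written as `x = H + y` with
`H ∈ ℋ_ι` and `y ∈ B_Ξ`. -/
theorem union_of_translates_covers {n N : ℕ} (C : SimpleCartanMatrix n)
    (ι : Fin N → Fin n) (hlong : IsLongestWord C.a (List.ofFn ι))
    {F : Type*} [Fintype F] (kphi : F → Fin N) (c : F → Fin N → ℤ) :
    ∀ x : Fin N → ℤ, ∃ H ∈ Hset C.a ι,
      ∃ y ∈ {y : Fin N → ℤ | ∀ f : F, 0 ≤ xiForm C.a ι (kphi f) (c f) y},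
        x = H + y := by
  exact union_of_translates_covers_general C.isFiniteCartanMatrix hlong.1 kphi c
end

section
/- Let ι = (i_1,…,i_N) be a reduced word for the longest element of the Weyl group of A, and let Ξ be a finite set of linear forms on ℤ^N, each of the form φ(x) = x_{k_φ} − ∑_{j : j^{(+)} ≤ N} c^{(φ)}_j β_j(x) for some index 1 ≤ k_φ ≤ N and integers c^{(φ)}_j. Set B_Ξ = {x ∈ ℤ^N : φ(x) ≥ 0 for all φ ∈ Ξ}. Assume (1) there exists x̃ ∈ ℤ^N with φ(x̃) ≥ 1 for all φ ∈ Ξ, and (2) the restricted graph on B_Ξ — with an edge between x and f̃_i(x) whenever both lie in B_Ξ, for every index i — is connected. Then the crystal graph of the cellular crystal B_ι on all of ℤ^N is connected. -/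
/-!
Translation by a vector `h ∈ ℋ_ι` shifts all the functions `a_m` with `i_m = i` by the same
constant, so it commutes with `f̃_i`, and it changes `φ` by the coordinate `h_{k_φ}`. Hence it is
enough to find a strictly positive vector in `ℋ_ι`: a large multiple of it moves any two points into
`B_Ξ`, where they are joined by a path that can be translated back.

Such a vector is `h_m = ⟨s_{i_{m-1}} ⋯ s_{i_1} ρ, α_{i_m}^∨⟩`. Expanding the reflections gives
`a_m(h) = -⟨ρ, α_{i_m}^∨⟩ = -1` for all `m`, so `h ∈ ℋ_ι`. On the other hand `h_m` is the height of
the coroot of `s_{i_1} ⋯ s_{i_{m-1}} α_{i_m}`, a positive root because `ι` is reduced. That every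
root is positive or negative follows from a Weyl-invariant inner product: the positive and negative
parts `v⁺`, `v⁻` of a mixed root `v = v⁺ - v⁻` would both be at least as long as `v`, with
`(v⁺, v⁻) ≤ 0`, making `v` longer than itself.
-/

namespace CellularCrystal

section InvariantForm

theorem two_mul_apply_of_isOrthogonal_preReflection {R M : Type*} [CommRing R] [AddCommGroup M]
    [Module R M] {B : LinearMap.BilinForm R M} {x : M} {f : Module.Dual R M} (hfx : f x = 2)
    (h : B.IsOrthogonal (Module.preReflection x f)) (v : M) : 2 * B v x = f v * B x x := by
  have hv := h v x
  rw [Module.preReflection_apply_self hfx, Module.preReflection_apply] at hv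
  simp only [map_sub, map_neg, map_smul, LinearMap.sub_apply, LinearMap.smul_apply,
    smul_eq_mul] at hv
  linear_combination -hv

theorem apply_nonpos_of_disjoint_support {ι K : Type*} [Finite ι] [DecidableEq ι] [Field K]
    [LinearOrder K] [IsStrictOrderedRing K] {B : LinearMap.BilinForm K (ι → K)}
    (hB : ∀ i j, i ≠ j → B (Pi.single i 1) (Pi.single j 1) ≤ 0) {v w : ι → K} (hv : 0 ≤ v)
    (hw : 0 ≤ w) (hvw : ∀ i, v i * w i = 0) : B v w ≤ 0 := by
  have := Fintype.ofFinite ι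
  rw [pi_eq_sum_univ' v, pi_eq_sum_univ' w]
  simp only [map_sum, map_smul, LinearMap.sum_apply, LinearMap.smul_apply, smul_eq_mul,
    Finset.mul_sum, ← mul_assoc]
  refine Finset.sum_nonpos fun j _ => Finset.sum_nonpos fun i _ => ?_
  obtain rfl | hij := eq_or_ne i j
  · rw [mul_comm (w i), hvw, zero_mul]
  · exact mul_nonpos_of_nonneg_of_nonpos (mul_nonneg (hw j) (hv i)) (hB i j hij)

-- The form is the sum `∑ g ∈ W, ⟨g v, g w⟩` of the standard dot product.
theorem exists_posDef_form_isOrthogonal {ι K : Type*} [Finite ι] [Field K] [LinearOrder K]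
    [IsStrictOrderedRing K] (W : Submonoid (Module.End K (ι → K))) [Finite W] :
    ∃ B : LinearMap.BilinForm K (ι → K), B.IsSymm ∧ (∀ v, v ≠ 0 → 0 < B v v) ∧
      ∀ g ∈ W, IsUnit g → B.IsOrthogonal g := by
  have := Fintype.ofFinite ι
  have := Fintype.ofFinite W
  let B : LinearMap.BilinForm K (ι → K) :=
    ∑ g : W, (dotProductBilin K K).compl₁₂ (g : Module.End K (ι → K)) (g : Module.End K (ι → K))
  have B_apply (v w) : B v w = ∑ g : W, g.1 v ⬝ᵥ g.1 w := by
    simp [B, LinearMap.sum_apply]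
  refine ⟨B, ⟨fun v w => ?_⟩, fun v hv => ?_, fun g hg hunit v w => ?_⟩
  · simp [B_apply, dotProduct_comm]
  · have hnonneg (u : ι → K) : 0 ≤ u ⬝ᵥ u := Finset.sum_nonneg fun _ _ => mul_self_nonneg _
    rw [B_apply]
    exact Finset.sum_pos' (fun g _ => hnonneg _) ⟨1, Finset.mem_univ _,
      (hnonneg v).lt_of_ne' (mt dotProduct_self_eq_zero.1 hv)⟩
  · have hbij : Function.Bijective fun k : W => k * ⟨g, hg⟩ :=
      Finite.injective_iff_bijective.1 fun k k' h =>
        Subtype.ext (hunit.mul_left_injective (congrArg Subtype.val h))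
    rw [B_apply, B_apply]
    exact hbij.sum_comp fun k : W => k.1 v ⬝ᵥ k.1 w

end InvariantForm

section WeylGroup

variable {n : ℕ} {a : Fin n → Fin n → ℤ}

variable (a) in
/-- The simple coroot `α_i^∨`, as the functional `v ↦ ∑ j, a_{ij} v_j` on the root lattice
tensored with `ℚ`, whose standard basis vectors are the simple roots. -/
def simpleCoroot (i : Fin n) : Module.Dual ℚ (Fin n → ℚ) :=
  Fintype.linearCombination ℚ fun j => (a i j : ℚ)

variable (a) in
/-- The simple reflection `sRefl a i` as a linear map. -/
def simpleReflection (i : Fin n) : Module.End ℚ (Fin n → ℚ) :=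
  Module.preReflection (Pi.single i 1) (simpleCoroot a i)

variable (a) in
/-- The Weyl group element `wProd a l` as a linear map. -/
def wordEnd (l : List (Fin n)) : Module.End ℚ (Fin n → ℚ) :=
  (l.map (simpleReflection a)).prod

theorem simpleCoroot_apply (i : Fin n) (v : Fin n → ℚ) :
    simpleCoroot a i v = ∑ j, (a i j : ℚ) * v j := by
  simp [simpleCoroot, Fintype.linearCombination_apply, mul_comm]

theorem simpleCoroot_single (i j : Fin n) : simpleCoroot a i (Pi.single j 1) = a i j := by
  simp [simpleCoroot]

theorem simpleReflection_apply (i : Fin n) (v : Fin n → ℚ) :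
    simpleReflection a i v = v - simpleCoroot a i v • Pi.single i 1 :=
  Module.preReflection_apply _ _ _

theorem simpleReflection_apply_of_ne {i k : Fin n} (hk : k ≠ i) (v : Fin n → ℚ) :
    simpleReflection a i v k = v k := by
  simp [simpleReflection_apply, hk]

theorem simpleReflection_mul_self {i : Fin n} (hi : a i i = 2) :
    simpleReflection a i * simpleReflection a i = 1 :=
  LinearMap.ext <| Module.involutive_preReflection (by simp [simpleCoroot_single, hi])

theorem wordEnd_cons (i : Fin n) (l : List (Fin n)) :
    wordEnd a (i :: l) = simpleReflection a i * wordEnd a l := by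
  simp [wordEnd]

theorem wordEnd_append (l l' : List (Fin n)) :
    wordEnd a (l ++ l') = wordEnd a l * wordEnd a l' := by
  simp [wordEnd]

theorem wordEnd_singleton (i : Fin n) : wordEnd a [i] = simpleReflection a i := by
  simp [wordEnd]

theorem coe_wordEnd (l : List (Fin n)) : ⇑(wordEnd a l) = wProd a l := by
  induction l with
  | nil => rfl
  | cons i l ih =>
    have hs : ⇑(simpleReflection a i) = sRefl a i := by
      ext v : 1
      rw [simpleReflection_apply, simpleCoroot_apply, sRefl]
    rw [wordEnd_cons, Module.End.coe_mul, ih, hs]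
    rfl

/-- A positive definite symmetric form on the root lattice tensored with `ℚ` that is invariant
under the Weyl group of `a`; invariance is required only for the simple reflections. -/
structure IsInvariantForm (a : Fin n → Fin n → ℤ) (B : LinearMap.BilinForm ℚ (Fin n → ℚ)) :
    Prop where
  symm : B.IsSymm
  pos : ∀ v, v ≠ 0 → 0 < B v v
  isOrthogonal : ∀ i, B.IsOrthogonal (simpleReflection a i)

theorem exists_isInvariantForm (hdiag : ∀ i, a i i = 2)
    (hfin : {w | ∃ l : List (Fin n), w = wProd a l}.Finite) :
    ∃ B : LinearMap.BilinForm ℚ (Fin n → ℚ), IsInvariantForm a B := by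
  let W := MonoidHom.mrange (FreeMonoid.lift (simpleReflection a))
  have : Finite W := by
    refine Set.Finite.of_injOn (f := fun g : Module.End ℚ (Fin n → ℚ) => ⇑g) ?_
      DFunLike.coe_injective.injOn hfin
    rintro _ ⟨l, rfl⟩
    exact ⟨l.toList, by rw [← coe_wordEnd, wordEnd, ← FreeMonoid.lift_apply]⟩
  obtain ⟨B, hsymm, hpos, hinv⟩ := exists_posDef_form_isOrthogonal W
  exact ⟨B, hsymm, hpos, fun i => hinv _ ⟨FreeMonoid.of i, FreeMonoid.lift_eval_of _ i⟩
    (IsUnit.of_mul_eq_one _ (simpleReflection_mul_self (hdiag i)))⟩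

namespace IsInvariantForm

variable {B : LinearMap.BilinForm ℚ (Fin n → ℚ)}

theorem single_pos (hB : IsInvariantForm a B) (k : Fin n) : 0 < B (Pi.single k 1) (Pi.single k 1) :=
  hB.pos _ (by simp)

theorem wordEnd_isOrthogonal (hB : IsInvariantForm a B) (l : List (Fin n)) :
    B.IsOrthogonal (wordEnd a l) := by
  induction l with
  | nil => exact fun _ _ => rfl
  | cons i l ih =>
    intro v w
    rw [wordEnd_cons, Module.End.mul_apply, Module.End.mul_apply, hB.isOrthogonal i, ih]

theorem two_mul_apply_single (hB : IsInvariantForm a B) (hdiag : ∀ i, a i i = 2) (v : Fin n → ℚ)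
    (k : Fin n) :
    2 * B v (Pi.single k 1) = simpleCoroot a k v * B (Pi.single k 1) (Pi.single k 1) :=
  two_mul_apply_of_isOrthogonal_preReflection (by simp [simpleCoroot_single, hdiag])
    (hB.isOrthogonal k) v

theorem two_mul_single_single (hB : IsInvariantForm a B) (hdiag : ∀ i, a i i = 2) (i k : Fin n) :
    2 * B (Pi.single i 1) (Pi.single k 1) = a k i * B (Pi.single k 1) (Pi.single k 1) := by
  rw [hB.two_mul_apply_single hdiag, simpleCoroot_single]

theorem symmetrizable (hB : IsInvariantForm a B) (hdiag : ∀ i, a i i = 2) (i j : Fin n) :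
    B (Pi.single i 1) (Pi.single i 1) * a i j = B (Pi.single j 1) (Pi.single j 1) * a j i := by
  have hij := hB.two_mul_single_single hdiag i j
  have hji := hB.two_mul_single_single hdiag j i
  rw [hB.symm.eq (Pi.single j 1) (Pi.single i 1)] at hji
  linarith

theorem single_single_nonpos (hB : IsInvariantForm a B) (hdiag : ∀ i, a i i = 2)
    (hoff : ∀ i j, i ≠ j → a i j ≤ 0) {i j : Fin n} (hij : i ≠ j) :
    B (Pi.single i 1) (Pi.single j 1) ≤ 0 := by
  have ha : (a j i : ℚ) ≤ 0 := mod_cast hoff j i hij.symm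
  have := mul_nonpos_of_nonpos_of_nonneg ha (hB.single_pos j).le
  rw [← hB.two_mul_single_single hdiag] at this
  linarith

theorem mul_simpleReflection_eq (hB : IsInvariantForm a B) (hdiag : ∀ i, a i i = 2)
    {g : Module.End ℚ (Fin n → ℚ)} (hg : B.IsOrthogonal g) {i j : Fin n} {c : ℚ}
    (hgi : g (Pi.single i 1) = c • Pi.single j 1) :
    g * simpleReflection a i = simpleReflection a j * g := by
  have hnorm : B (Pi.single i 1) (Pi.single i 1)
      = c * (c * B (Pi.single j 1) (Pi.single j 1)) := by
    rw [← hg, hgi]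
    simp
  have hc : c ≠ 0 := by
    rintro rfl
    simpa [hnorm] using hB.single_pos i
  have hcoroot (v : Fin n → ℚ) : simpleCoroot a i v * c = simpleCoroot a j (g v) := by
    have hi := hB.two_mul_apply_single hdiag v i
    have hj := hB.two_mul_apply_single hdiag (g v) j
    rw [← hg, hgi, map_smul, smul_eq_mul, hnorm] at hi
    refine mul_left_cancel₀ (mul_ne_zero hc (hB.single_pos j).ne') ?_
    linear_combination c * hj - hi
  refine LinearMap.ext fun v => ?_
  rw [Module.End.mul_apply, Module.End.mul_apply, simpleReflection_apply, simpleReflection_apply,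
    map_sub, map_smul, hgi, smul_smul, hcoroot]

end IsInvariantForm

/-- The intersection of the root lattice with `D` times the coroot lattice, in simple root
coordinates, where `d k` is the squared length of the `k`-th simple root: the coroot lattice is
spanned by the vectors `α_k / d k`, up to a common factor. -/
def scaledCorootLattice (d : Fin n → ℚ) (D : ℚ) : AddSubgroup (Fin n → ℚ) where
  carrier := {v | ∀ k, v k ∈ AddSubgroup.zmultiples (1 : ℚ) ∧
    d k * v k ∈ AddSubgroup.zmultiples D}
  zero_mem' k := by simp
  add_mem' hv hw k := by
    rw [Pi.add_apply, mul_add]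
    exact ⟨add_mem (hv k).1 (hw k).1, add_mem (hv k).2 (hw k).2⟩
  neg_mem' hv k := by
    rw [Pi.neg_apply, mul_neg]
    exact ⟨neg_mem (hv k).1, neg_mem (hv k).2⟩

theorem single_mem_scaledCorootLattice (d : Fin n → ℚ) (j : Fin n) :
    Pi.single j 1 ∈ scaledCorootLattice d (d j) := by
  intro k
  obtain rfl | hk := eq_or_ne k j
  · simp
  · simp [hk]

theorem posPart_mem_scaledCorootLattice {d : Fin n → ℚ} {D : ℚ} {v : Fin n → ℚ}
    (hv : v ∈ scaledCorootLattice d D) : v⁺ ∈ scaledCorootLattice d D := by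
  intro k
  rw [Pi.posPart_apply]
  obtain h | h := le_total 0 (v k)
  · rw [posPart_of_nonneg h]
    exact hv k
  · simp [posPart_of_nonpos h]

theorem simpleReflection_mem_scaledCorootLattice {d : Fin n → ℚ}
    (hd : ∀ i j, d i * a i j = d j * a j i) {D : ℚ} {v : Fin n → ℚ}
    (hv : v ∈ scaledCorootLattice d D) (i : Fin n) :
    simpleReflection a i v ∈ scaledCorootLattice d D := by
  rw [simpleReflection_apply]
  refine sub_mem hv fun k => ?_
  obtain rfl | hk := eq_or_ne k i
  · simp only [Pi.smul_apply, Pi.single_eq_same, smul_eq_mul, mul_one, simpleCoroot_apply,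
      Finset.mul_sum]
    refine ⟨sum_mem fun j _ => ?_, sum_mem fun j _ => ?_⟩
    · simpa using zsmul_mem (hv j).1 (a k j)
    · rw [← mul_assoc, hd, mul_right_comm, mul_comm]
      simpa using zsmul_mem (hv j).2 (a j k)
  · simp [hk]

theorem wordEnd_mem_scaledCorootLattice {d : Fin n → ℚ}
    (hd : ∀ i j, d i * a i j = d j * a j i) {D : ℚ} {v : Fin n → ℚ}
    (hv : v ∈ scaledCorootLattice d D) (l : List (Fin n)) :
    wordEnd a l v ∈ scaledCorootLattice d D := by
  induction l with
  | nil => exact hv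
  | cons i l ih =>
    rw [wordEnd_cons]
    exact simpleReflection_mem_scaledCorootLattice hd ih i

theorem mul_mem_zmultiples {x y D : ℚ} (hx : x ∈ AddSubgroup.zmultiples (1 : ℚ))
    (hy : y ∈ AddSubgroup.zmultiples D) : x * y ∈ AddSubgroup.zmultiples D := by
  obtain ⟨m, rfl⟩ := hx
  simpa using zsmul_mem hy m

namespace IsInvariantForm

variable {B : LinearMap.BilinForm ℚ (Fin n → ℚ)}

theorem apply_self_mem_zmultiples (hB : IsInvariantForm a B) (hdiag : ∀ i, a i i = 2) {D : ℚ}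
    {v : Fin n → ℚ} (hv : v ∈ scaledCorootLattice (fun k => B (Pi.single k 1) (Pi.single k 1)) D) :
    B v v ∈ AddSubgroup.zmultiples D := by
  have expand := QuadraticMap.map_sum B.toQuadraticMap Finset.univ
    fun k => v k • (Pi.single k 1 : Fin n → ℚ)
  rw [← pi_eq_sum_univ', LinearMap.BilinMap.toQuadraticMap_apply] at expand
  rw [expand]
  refine add_mem (sum_mem fun k _ => ?_) (sum_mem fun ij _ => ?_)
  · simpa [mul_comm (v k) (B _ _)] using mul_mem_zmultiples (hv k).1 (hv k).2
  · induction ij with | h i j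
    have hij : QuadraticMap.polarSym2 B.toQuadraticMap
        (s(i, j).map fun k => v k • (Pi.single k 1 : Fin n → ℚ))
          = a j i • (v i * (B (Pi.single j 1) (Pi.single j 1) * v j)) := by
      rw [Sym2.map_mk, QuadraticMap.polarSym2_sym2Mk, LinearMap.BilinMap.polar_toQuadraticMap,
        hB.symm.eq (v j • _)]
      simp only [map_smul, LinearMap.smul_apply, smul_eq_mul, zsmul_eq_mul]
      linear_combination v i * v j * hB.two_mul_single_single hdiag i j
    rw [hij]
    exact zsmul_mem (mul_mem_zmultiples (hv i).1 (hv j).2) _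

theorem le_apply_self (hB : IsInvariantForm a B) (hdiag : ∀ i, a i i = 2) {D : ℚ} (hD : 0 < D)
    {v : Fin n → ℚ} (hv0 : v ≠ 0)
    (hv : v ∈ scaledCorootLattice (fun k => B (Pi.single k 1) (Pi.single k 1)) D) :
    D ≤ B v v := by
  obtain ⟨m, hm⟩ := hB.apply_self_mem_zmultiples hdiag hv
  have hpos := hB.pos v hv0
  simp only [zsmul_eq_mul] at hm
  rw [← hm] at hpos ⊢
  have hm1 : (1 : ℚ) ≤ m := mod_cast (pos_of_mul_pos_left hpos hD.le : (0 : ℚ) < m)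
  exact le_mul_of_one_le_left hD.le hm1

-- If both parts of `v = v⁺ - v⁻` were nonzero, each would have squared length at least `D`, and
-- `B v⁺ v⁻ ≤ 0`, so `v` would have squared length at least `2 * D`.
theorem nonneg_or_nonpos_of_apply_self_lt (hB : IsInvariantForm a B) (hdiag : ∀ i, a i i = 2)
    (hoff : ∀ i j, i ≠ j → a i j ≤ 0) {D : ℚ} (hD : 0 < D) {v : Fin n → ℚ}
    (hv : v ∈ scaledCorootLattice (fun k => B (Pi.single k 1) (Pi.single k 1)) D)
    (hlt : B v v < 2 * D) : 0 ≤ v ∨ v ≤ 0 := by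
  by_contra! h
  have hpos : D ≤ B v⁺ v⁺ := hB.le_apply_self hdiag hD (mt posPart_eq_zero.1 h.2)
    (posPart_mem_scaledCorootLattice hv)
  have hneg : D ≤ B v⁻ v⁻ := hB.le_apply_self hdiag hD (mt negPart_eq_zero.1 h.1)
    (posPart_neg v ▸ posPart_mem_scaledCorootLattice (neg_mem hv))
  have hobtuse : B v⁺ v⁻ ≤ 0 :=
    apply_nonpos_of_disjoint_support (fun i j => hB.single_single_nonpos hdiag hoff)
      (posPart_nonneg v) (negPart_nonneg v) fun k => by
        obtain hk | hk := le_total 0 (v k) <;> simp [hk]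
  have hexpand : B v v = B v⁺ v⁺ - 2 * B v⁺ v⁻ + B v⁻ v⁻ := by
    conv_lhs => rw [← posPart_sub_negPart v]
    simp only [map_sub, LinearMap.sub_apply, hB.symm.eq v⁻ v⁺]
    ring
  linarith

theorem root_nonneg_or_nonpos (hB : IsInvariantForm a B) (hdiag : ∀ i, a i i = 2)
    (hoff : ∀ i j, i ≠ j → a i j ≤ 0) (l : List (Fin n)) (j : Fin n) :
    0 ≤ wordEnd a l (Pi.single j 1) ∨ wordEnd a l (Pi.single j 1) ≤ 0 := by
  have hj := hB.single_pos j
  refine hB.nonneg_or_nonpos_of_apply_self_lt hdiag hoff hj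
    (wordEnd_mem_scaledCorootLattice (hB.symmetrizable hdiag)
      (single_mem_scaledCorootLattice _ j) l) ?_
  rw [hB.wordEnd_isOrthogonal]
  linarith

-- Reading `l` from the right, the letter `j` that turns the root negative can do so only if the
-- root was a multiple of `α_j`; then `s_j` and the final `s_i` cancel.
theorem exists_wordEnd_eq_of_not_nonneg (hB : IsInvariantForm a B) (hdiag : ∀ i, a i i = 2)
    (hoff : ∀ i j, i ≠ j → a i j ≤ 0) {l : List (Fin n)} {i : Fin n}
    (h : ¬ 0 ≤ wordEnd a l (Pi.single i 1)) :
    ∃ l' : List (Fin n), l'.length + 1 = l.length ∧ wordEnd a l' = wordEnd a (l ++ [i]) := by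
  induction l with
  | nil => exact absurd (by simp [wordEnd]) h
  | cons j l ih =>
    by_cases hl : 0 ≤ wordEnd a l (Pi.single i 1)
    · have hneg := (hB.root_nonneg_or_nonpos hdiag hoff (j :: l) i).resolve_left h
      have hsingle : wordEnd a l (Pi.single i 1)
          = wordEnd a l (Pi.single i 1) j • Pi.single j 1 := by
        ext k
        obtain rfl | hk := eq_or_ne k j
        · simp
        · have hk0 := hneg k
          rw [wordEnd_cons, Module.End.mul_apply, simpleReflection_apply_of_ne hk] at hk0
          simpa [hk] using le_antisymm hk0 (hl k)
      refine ⟨l, rfl, ?_⟩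
      rw [List.cons_append, wordEnd_cons, wordEnd_append, wordEnd_singleton,
        hB.mul_simpleReflection_eq hdiag (hB.wordEnd_isOrthogonal l) hsingle, ← mul_assoc,
        simpleReflection_mul_self (hdiag j), one_mul]
    · obtain ⟨l', hlen, hl'⟩ := ih hl
      refine ⟨j :: l', by simpa using hlen, ?_⟩
      rw [List.cons_append, wordEnd_cons, wordEnd_cons, hl']

theorem root_nonneg_of_isReducedList (hB : IsInvariantForm a B) (hdiag : ∀ i, a i i = 2)
    (hoff : ∀ i j, i ≠ j → a i j ≤ 0) {l : List (Fin n)} {i : Fin n}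
    (hred : IsReducedList a (l ++ [i])) :
    0 ≤ wordEnd a l (Pi.single i 1) := by
  by_contra h
  obtain ⟨l', hlen, hl'⟩ := hB.exists_wordEnd_eq_of_not_nonneg hdiag hoff h
  have := hred l' (by rw [← coe_wordEnd, ← coe_wordEnd, hl'])
  rw [List.length_append, List.length_singleton] at this
  lia

end IsInvariantForm

variable (a) in
/-- The weight `s_{i_m} ⋯ s_{i_1} μ` for the word `l = (i_1, …, i_m)`. A weight is encoded by its
pairings with the simple coroots. -/
def weightOrbit (μ : Fin n → ℤ) (l : List (Fin n)) : Fin n → ℤ :=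
  l.foldl (fun ν i k => ν k - a k i * ν i) μ

theorem weightOrbit_concat (μ : Fin n → ℤ) (l : List (Fin n)) (i k : Fin n) :
    weightOrbit a μ (l ++ [i]) k = weightOrbit a μ l k - a k i * weightOrbit a μ l i := by
  simp [weightOrbit]

-- For `d k = (α_k, α_k)` this is `2 (v, s_{i_m} ⋯ s_{i_1} μ) = 2 (s_{i_1} ⋯ s_{i_m} v, μ)`.
theorem sum_mul_weightOrbit {d : Fin n → ℚ} (hd : ∀ i j, d i * a i j = d j * a j i)
    (μ : Fin n → ℤ) (l : List (Fin n)) (v : Fin n → ℚ) :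
    ∑ k, d k * v k * weightOrbit a μ l k = ∑ k, d k * wordEnd a l v k * μ k := by
  induction l using List.reverseRecOn generalizing v with
  | nil => simp [wordEnd, weightOrbit]
  | append_singleton l i ih =>
    have hcoroot : d i * simpleCoroot a i v = ∑ k, d k * v k * a k i := by
      rw [simpleCoroot_apply, Finset.mul_sum]
      exact Finset.sum_congr rfl fun k _ => by linear_combination v k * hd i k
    have hsingle : ∑ k, d k * (simpleCoroot a i v • (Pi.single i 1 : Fin n → ℚ)) k
        * weightOrbit a μ l k = d i * simpleCoroot a i v * weightOrbit a μ l i := by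
      rw [Fintype.sum_eq_single i fun k hk => by simp [hk]]
      simp
    rw [wordEnd_append, wordEnd_singleton, Module.End.mul_apply, ← ih, simpleReflection_apply]
    simp only [Pi.sub_apply, mul_sub, sub_mul, Finset.sum_sub_distrib, weightOrbit_concat,
      Int.cast_sub, Int.cast_mul]
    rw [hsingle, hcoroot, Finset.sum_mul]
    simp only [mul_assoc]

theorem IsInvariantForm.weightOrbit_pos {B : LinearMap.BilinForm ℚ (Fin n → ℚ)}
    (hB : IsInvariantForm a B) (hdiag : ∀ i, a i i = 2) (hoff : ∀ i j, i ≠ j → a i j ≤ 0)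
    {μ : Fin n → ℤ} (hμ : ∀ k, 0 < μ k) {l : List (Fin n)} {i : Fin n}
    (hred : IsReducedList a (l ++ [i])) : 0 < weightOrbit a μ l i := by
  have hroot := hB.root_nonneg_of_isReducedList hdiag hoff hred
  obtain ⟨k, hk⟩ : ∃ k, wordEnd a l (Pi.single i 1) k ≠ 0 := by
    by_contra! h0
    refine (hB.single_pos i).ne' ?_
    rw [← hB.wordEnd_isOrthogonal l, funext h0]
    exact map_zero _
  have hpairing := sum_mul_weightOrbit (hB.symmetrizable hdiag) μ l (Pi.single i 1)
  rw [Fintype.sum_eq_single i fun k hk => by simp [hk], Pi.single_eq_same, mul_one] at hpairing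
  have hpos : 0 < B (Pi.single i 1) (Pi.single i 1) * weightOrbit a μ l i := by
    rw [hpairing]
    refine Finset.sum_pos' (fun k _ => ?_) ⟨k, Finset.mem_univ _, ?_⟩
    · exact mul_nonneg (mul_nonneg (hB.single_pos k).le (hroot k)) (mod_cast (hμ k).le)
    · exact mul_pos (mul_pos (hB.single_pos k) ((hroot k).lt_of_ne' hk)) (mod_cast hμ k)
  exact_mod_cast pos_of_mul_pos_right hpos (hB.single_pos i).le

theorem isReducedList_of_append {l l' : List (Fin n)} (h : IsReducedList a (l ++ l')) :
    IsReducedList a l := by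
  intro l'' hl''
  have hprod : wProd a (l'' ++ l') = wProd a (l ++ l') := by
    rw [← coe_wordEnd, ← coe_wordEnd, wordEnd_append, wordEnd_append,
      DFunLike.coe_injective ((coe_wordEnd l'').trans (hl''.trans (coe_wordEnd l).symm))]
  simpa using h _ hprod

variable (a) in
/-- The vector of `ℤ^N` with coordinates `⟨s_{i_{m-1}} ⋯ s_{i_1} μ, α_{i_m}^∨⟩`; for regular
dominant `μ` and reduced `ι` these are positive, and the vector always lies in `ℋ_ι`. -/
def weightShift {N : ℕ} (ι : Fin N → Fin n) (μ : Fin n → ℤ) (m : Fin N) : ℤ :=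
  weightOrbit a μ ((List.ofFn ι).take m) (ι m)

theorem take_ofFn_succ {N : ℕ} (ι : Fin N → Fin n) (m : Fin N) :
    (List.ofFn ι).take (m + 1) = (List.ofFn ι).take m ++ [ι m] := by
  rw [List.take_succ_eq_append_getElem (by simp), List.getElem_ofFn]

theorem weightOrbit_take_ofFn {N : ℕ} (ι : Fin N → Fin n) (μ : Fin n → ℤ) (i : Fin n) {m : ℕ}
    (hm : m ≤ N) : weightOrbit a μ ((List.ofFn ι).take m) i
      = μ i - ∑ ν with ν.1 < m, a i (ι ν) * weightShift a ι μ ν := by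
  induction m with
  | zero => simp [weightOrbit]
  | succ m ih =>
    have hfilter : (Finset.univ.filter fun ν : Fin N => ν.1 < m + 1)
        = insert ⟨m, hm⟩ (Finset.univ.filter fun ν : Fin N => ν.1 < m) := by
      ext ν
      simp [Fin.ext_iff, Nat.le_iff_lt_or_eq, or_comm]
    rw [take_ofFn_succ ι ⟨m, hm⟩, weightOrbit_concat, ih (Nat.le_of_succ_le hm), hfilter,
      Finset.sum_insert (by simp), weightShift]
    ring

theorem cellA_weightShift {N : ℕ} (ι : Fin N → Fin n) (μ : Fin n → ℤ) (m : Fin N) :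
    cellA a ι (ι m) (weightShift a ι μ) m = -μ (ι m) := by
  rw [cellA, weightShift, weightOrbit_take_ofFn ι μ (ι m) m.2.le]
  simp only [Fin.lt_def]
  ring

theorem weightShift_pos (hdiag : ∀ i, a i i = 2) (hoff : ∀ i j, i ≠ j → a i j ≤ 0)
    (hfin : {w | ∃ l : List (Fin n), w = wProd a l}.Finite) {N : ℕ} {ι : Fin N → Fin n}
    (hred : IsReducedList a (List.ofFn ι)) {μ : Fin n → ℤ} (hμ : ∀ k, 0 < μ k) (m : Fin N) :
    0 < weightShift a ι μ m := by
  obtain ⟨B, hB⟩ := exists_isInvariantForm hdiag hfin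
  refine hB.weightOrbit_pos hdiag hoff hμ ?_
  rw [← take_ofFn_succ]
  exact isReducedList_of_append (l' := (List.ofFn ι).drop (m + 1))
    (by rwa [List.take_append_drop])

end WeylGroup

section Crystal

variable {n N : ℕ} {a : Fin n → Fin n → ℤ} {ι : Fin N → Fin n}

theorem betaFn_eq_cellA_sub_cellA (hdiag : ∀ i, a i i = 2) {k l : Fin N} (hkl : k < l)
    (hι : ι l = ι k) (hnext : ∀ j, k < j → ι j = ι k → l ≤ j) (x : Fin N → ℤ) :
    betaFn a ι k x = cellA a ι (ι k) x k - cellA a ι (ι k) x l := by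
  have hl : l ∈ Finset.univ.filter fun j => k < j ∧ ι j = ι k := by simp [hkl, hι]
  have hmin : (Finset.univ.filter fun j => k < j ∧ ι j = ι k).min' ⟨l, hl⟩ = l :=
    le_antisymm (Finset.min'_le _ _ hl) <| Finset.le_min' _ _ _ fun j hj => by
      simp only [Finset.mem_filter, Finset.mem_univ, true_and] at hj
      exact hnext j hj.1 hj.2
  have hsplit : (Finset.univ.filter (· < l))
      = (Finset.univ.filter (· < k)) ∪ insert k (Finset.univ.filter fun j => k < j ∧ j < l) := by
    ext j
    simp only [Finset.mem_filter, Finset.mem_univ, true_and, Finset.mem_union, Finset.mem_insert]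
    grind
  have hdisj : Disjoint (Finset.univ.filter (· < k))
      (insert k (Finset.univ.filter fun j => k < j ∧ j < l)) := by
    simp only [Finset.disjoint_left, Finset.mem_filter, Finset.mem_univ, true_and,
      Finset.mem_insert]
    grind
  rw [betaFn, dif_pos ⟨l, hl⟩, hmin, cellA, cellA, hsplit, Finset.sum_union hdisj,
    Finset.sum_insert (by simp), hdiag]
  ring

theorem exists_next_occurrence {k : Fin N} (hk : ∃ l, k < l ∧ ι l = ι k) :
    ∃ l, k < l ∧ ι l = ι k ∧ ∀ j, k < j → ι j = ι k → l ≤ j := by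
  obtain ⟨l, ⟨hkl, hι⟩, hmin⟩ := wellFounded_lt.has_min {l | k < l ∧ ι l = ι k} hk
  exact ⟨l, hkl, hι, fun j hj hιj => not_lt.1 (hmin j ⟨hj, hιj⟩)⟩

theorem cellA_eq_cellA_of_mem_Hset (hdiag : ∀ i, a i i = 2) {h : Fin N → ℤ} (hh : h ∈ Hset a ι)
    {m m' : Fin N} (hlt : m < m') (hι : ι m = ι m') :
    cellA a ι (ι m) h m = cellA a ι (ι m) h m' := by
  induction m using WellFoundedGT.induction with
  | ind m ih =>
    obtain ⟨l, hml, hιl, hnext⟩ := exists_next_occurrence ⟨m', hlt, hι.symm⟩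
    have hβ := hh m ⟨m', hlt, hι.symm⟩
    rw [betaFn_eq_cellA_sub_cellA hdiag hml hιl hnext, sub_eq_zero] at hβ
    obtain rfl | hlm' := (hnext m' hlt hι.symm).eq_or_lt
    · exact hβ
    · rw [hβ, ← hιl]
      exact ih l hml hlm' (hιl.trans hι)

theorem mem_Hset_iff (hdiag : ∀ i, a i i = 2) {h : Fin N → ℤ} :
    h ∈ Hset a ι ↔ ∀ m m', ι m = ι m' → cellA a ι (ι m) h m = cellA a ι (ι m) h m' := by
  refine ⟨fun hh m m' hι => ?_, fun hcell k hk => ?_⟩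
  · obtain hlt | rfl | hlt := lt_trichotomy m m'
    · exact cellA_eq_cellA_of_mem_Hset hdiag hh hlt hι
    · rfl
    · rw [hι]
      exact (cellA_eq_cellA_of_mem_Hset hdiag hh hlt hι.symm).symm
  · obtain ⟨l, hkl, hι, hnext⟩ := exists_next_occurrence hk
    rw [betaFn_eq_cellA_sub_cellA hdiag hkl hι hnext, hcell k l hι.symm, sub_self]

theorem weightShift_mem_Hset (hdiag : ∀ i, a i i = 2) (μ : Fin n → ℤ) :
    weightShift a ι μ ∈ Hset a ι :=
  (mem_Hset_iff hdiag).2 fun m m' hι => by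
    rw [cellA_weightShift, hι, cellA_weightShift]

theorem cellA_add (i : Fin n) (x y : Fin N → ℤ) (m : Fin N) :
    cellA a ι i (x + y) m = cellA a ι i x m + cellA a ι i y m := by
  simp only [cellA, Pi.add_apply, mul_add, Finset.sum_add_distrib]
  ring

theorem argminSet_add (hdiag : ∀ i, a i i = 2) {h : Fin N → ℤ} (hh : h ∈ Hset a ι) (i : Fin n)
    (x : Fin N → ℤ) : argminSet a ι i (x + h) = argminSet a ι i x := by
  refine Finset.filter_congr fun m hm => forall₂_congr fun m' hm' => ?_
  simp only [Finset.mem_filter, Finset.mem_univ, true_and] at hm hm'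
  subst hm
  rw [cellA_add, cellA_add, (mem_Hset_iff hdiag).1 hh m m' hm'.symm, add_le_add_iff_right]

theorem kashF_add (hdiag : ∀ i, a i i = 2) {h : Fin N → ℤ} (hh : h ∈ Hset a ι) (i : Fin n)
    (x : Fin N → ℤ) : kashF a ι i (x + h) = kashF a ι i x + h := by
  simp only [kashF, argminSet_add hdiag hh]
  split_ifs
  · ext m
    simp only [Function.update_apply, Pi.add_apply]
    split_ifs with hm
    · rw [hm]
      ring
    · rfl
  · rfl

theorem kashF_eq_self {i : Fin n} (hi : ∀ m, ι m ≠ i) (x : Fin N → ℤ) : kashF a ι i x = x := by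
  simp [kashF, argminSet, hi]

theorem betaFn_add (k : Fin N) (x y : Fin N → ℤ) :
    betaFn a ι k (x + y) = betaFn a ι k x + betaFn a ι k y := by
  unfold betaFn
  split_ifs
  · simp only [Pi.add_apply, mul_add, Finset.sum_add_distrib]
    ring
  · simp

theorem nsmul_mem_Hset {h : Fin N → ℤ} (hh : h ∈ Hset a ι) (q : ℕ) : q • h ∈ Hset a ι := by
  intro k hk
  let β : (Fin N → ℤ) →+ ℤ := AddMonoidHom.mk' (betaFn a ι k) (betaFn_add k)
  have hβ : β (q • h) = q • β h := map_nsmul β q h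
  exact hβ.trans (by rw [AddMonoidHom.mk'_apply, hh k hk, smul_zero])

theorem xiForm_add_of_mem_Hset (kphi : Fin N) (c : Fin N → ℤ) {h : Fin N → ℤ}
    (hh : h ∈ Hset a ι) (x : Fin N → ℤ) :
    xiForm a ι kphi c (x + h) = xiForm a ι kphi c x + h kphi := by
  have hsum : ∑ j with ∃ l, j < l ∧ ι l = ι j, c j * betaFn a ι j (x + h)
      = ∑ j with ∃ l, j < l ∧ ι l = ι j, c j * betaFn a ι j x :=
    Finset.sum_congr rfl fun j hj => by
      rw [betaFn_add, hh j (Finset.mem_filter.1 hj).2, add_zero]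
  rw [xiForm, xiForm, hsum, Pi.add_apply]
  ring

theorem reflTransGen_cellEdge_of_add (hdiag : ∀ i, a i i = 2) {h : Fin N → ℤ}
    (hh : h ∈ Hset a ι) {x y : Fin N → ℤ}
    (hpath : Relation.ReflTransGen
      (fun u v => ∃ i, kashF a ι i u = v ∨ kashF a ι i v = u) (x + h) (y + h)) :
    Relation.ReflTransGen (cellEdge a ι) x y := by
  have hsub (i : Fin n) (u : Fin N → ℤ) : kashF a ι i (u - h) = kashF a ι i u - h := by
    rw [eq_sub_iff_add_eq, ← kashF_add hdiag hh, sub_add_cancel]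
  have hlift := Relation.ReflTransGen.lift' (p := cellEdge a ι) (fun u => u - h) ?_ _ _ hpath
  · simpa [Function.onFun] using hlift
  rintro u v ⟨i, huv⟩
  by_cases hi : ∃ m, ι m = i
  · refine .single ⟨i, hi, ?_⟩
    rw [hsub, hsub]
    exact huv.imp (congrArg (· - h)) (congrArg (· - h))
  · simp only [kashF_eq_self (not_exists.1 hi)] at huv
    obtain rfl | rfl := huv <;> exact .refl

theorem exists_mem_Hset_forall_le (hdiag : ∀ i, a i i = 2) (hoff : ∀ i j, i ≠ j → a i j ≤ 0)
    (hfin : {w | ∃ l : List (Fin n), w = wProd a l}.Finite)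
    (hred : IsReducedList a (List.ofFn ι)) (q : ℕ) : ∃ h ∈ Hset a ι, ∀ m, (q : ℤ) ≤ h m := by
  refine ⟨q • weightShift a ι 1, nsmul_mem_Hset (weightShift_mem_Hset hdiag 1) q, fun m => ?_⟩
  have hpos := weightShift_pos hdiag hoff hfin hred (μ := 1) (fun _ => one_pos) m
  rw [Pi.smul_apply, nsmul_eq_mul]
  exact le_mul_of_one_le_right (Int.natCast_nonneg q) hpos

variable (a ι) in
/-- The set `B_Ξ` on which the linear forms with data `(kphi f, c f)` are nonnegative. -/
def BXi {F : Type*} (kphi : F → Fin N) (c : F → Fin N → ℤ) : Set (Fin N → ℤ) :=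
  {x | ∀ f, 0 ≤ xiForm a ι (kphi f) (c f) x}

theorem exists_mem_Hset_add_mem_BXi (hdiag : ∀ i, a i i = 2)
    (hoff : ∀ i j, i ≠ j → a i j ≤ 0) (hfin : {w | ∃ l : List (Fin n), w = wProd a l}.Finite)
    (hred : IsReducedList a (List.ofFn ι)) {F : Type*} [Finite F] (kphi : F → Fin N)
    (c : F → Fin N → ℤ) (x y : Fin N → ℤ) :
    ∃ h ∈ Hset a ι, x + h ∈ BXi a ι kphi c ∧ y + h ∈ BXi a ι kphi c := by
  let φ (f : F) (z : Fin N → ℤ) : ℤ := xiForm a ι (kphi f) (c f) z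
  obtain ⟨q, hq⟩ := Finite.exists_le fun f => max (φ f x).natAbs (φ f y).natAbs
  obtain ⟨h, hh, hle⟩ := exists_mem_Hset_forall_le hdiag hoff hfin hred q
  have hmem (z : Fin N → ℤ) (hz : ∀ f, (φ f z).natAbs ≤ q) : z + h ∈ BXi a ι kphi c := by
    intro f
    rw [xiForm_add_of_mem_Hset _ _ hh]
    have := hz f
    have := hle (kphi f)
    lia
  exact ⟨h, hh, hmem x fun f => (le_max_left _ _).trans (hq f),
    hmem y fun f => (le_max_right _ _).trans (hq f)⟩

end Crystal

end CellularCrystal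

open CellularCrystal in
theorem cellular_connected_of_BXi_connected_general {n N : ℕ} (a : Fin n → Fin n → ℤ)
    (hdiag : ∀ i, a i i = 2) (hoff : ∀ i j, i ≠ j → a i j ≤ 0)
    (hfin : {w | ∃ l : List (Fin n), w = wProd a l}.Finite) (ι : Fin N → Fin n)
    (hred : IsReducedList a (List.ofFn ι)) {F : Type*} [Finite F] (kphi : F → Fin N)
    (c : F → Fin N → ℤ)
    (hconn : ∀ x ∈ BXi a ι kphi c, ∀ y ∈ BXi a ι kphi c,
      Relation.ReflTransGen (fun u v => u ∈ BXi a ι kphi c ∧ v ∈ BXi a ι kphi c ∧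
        ∃ i, kashF a ι i u = v ∨ kashF a ι i v = u) x y) (x y : Fin N → ℤ) :
    Relation.ReflTransGen (cellEdge a ι) x y := by
  obtain ⟨h, hh, hx, hy⟩ := exists_mem_Hset_add_mem_BXi hdiag hoff hfin hred kphi c x y
  have hpath := hconn _ hx _ hy
  exact reflTransGen_cellEdge_of_add hdiag hh
    (Relation.ReflTransGen.mono (fun _ _ huv => huv.2.2) _ _ hpath)

/-- If `B_Ξ` admits `x̃` with all `φ(x̃) ≥ 1` and the restricted
crystal graph on `B_Ξ` is connected, then the crystal graph of the cellular
crystal `B_ι` on all of `ℤ^N` is connected. -/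
theorem cellular_connected_of_BXi_connected {n N : ℕ} (C : SimpleCartanMatrix n)
    (ι : Fin N → Fin n) (hlong : IsLongestWord C.a (List.ofFn ι))
    {F : Type*} [Fintype F] (kphi : F → Fin N) (c : F → Fin N → ℤ)
    (hxt : ∃ xt : Fin N → ℤ, ∀ f : F, 1 ≤ xiForm C.a ι (kphi f) (c f) xt)
    (hconn : ∀ x ∈ {x : Fin N → ℤ | ∀ f : F, 0 ≤ xiForm C.a ι (kphi f) (c f) x},
      ∀ y ∈ {x : Fin N → ℤ | ∀ f : F, 0 ≤ xiForm C.a ι (kphi f) (c f) x},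
        Relation.ReflTransGen
          (fun u v =>
            u ∈ {x : Fin N → ℤ | ∀ f : F, 0 ≤ xiForm C.a ι (kphi f) (c f) x} ∧
            v ∈ {x : Fin N → ℤ | ∀ f : F, 0 ≤ xiForm C.a ι (kphi f) (c f) x} ∧
            ∃ i : Fin n, kashF C.a ι i u = v ∨ kashF C.a ι i v = u)
          x y) :
    ∀ x y : Fin N → ℤ, Relation.ReflTransGen (cellEdge C.a ι) x y := by
  exact cellular_connected_of_BXi_connected_general C.a C.diag C.offdiag_nonpos C.finiteWeyl
    ι hlong.1 kphi c hconn
end
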